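/- Fix an integer n ≥ 1. There exists a constant C > 0 such that, as Y → ∞, (−1)^{n+1} ∑_{mr ≤ Y} Λ(r) log^n r = (−1)^{n+1} (1/(n+1)) Y log^{n+1} Y + (−1)^{n+1} ∑_{k=0}^{n} binom(n,k) (−1)^k k! (−1 + ∑_{j=0}^{k} (−1)^j C_j) Y log^{n−k} Y + n! A_n Y + O(Y e^{−C√(log Y)}), where the sum on the left runs over all ordered pairs (m, r) of positive integers with mr ≤ Y. -/

import Mathlib

open Complex Finset

/-- `∑_{mr ≤ Y} Λ(r) log^n r`, summed over all ordered pairs `(m, r)` of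
positive integers with `mr ≤ Y`. -/
noncomputable def vonMangoldtPairSum (n : ℕ) (Y : ℝ) : ℝ :=
  ∑ p ∈ (Finset.Icc 1 ⌊Y⌋₊ ×ˢ Finset.Icc 1 ⌊Y⌋₊).filter
      (fun p : ℕ × ℕ => ((p.1 : ℝ) * (p.2 : ℝ) ≤ Y)),
    ArithmeticFunction.vonMangoldt p.2 * Real.log p.2 ^ n

/-- The full main term, expressed via the Laurent coefficients `C j` of `ζ`
and `A j` of `ζ'/ζ` about `s = 1`. -/
noncomputable def Mterm (C A : ℕ → ℂ) (n : ℕ) (Y : ℝ) : ℂ :=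
  (-1 : ℂ) ^ (n + 1) * (1 / ((n : ℂ) + 1)) * ((Y * Real.log Y ^ (n + 1) : ℝ) : ℂ)
  + (-1 : ℂ) ^ (n + 1) *
      ∑ k ∈ Finset.range (n + 1),
        (n.choose k : ℂ) * (-1 : ℂ) ^ k * (k.factorial : ℂ) *
          (-1 + ∑ j ∈ Finset.range (k + 1), (-1 : ℂ) ^ j * C j) *
          ((Y * Real.log Y ^ (n - k) : ℝ) : ℂ)
  + (n.factorial : ℂ) * A n * ((Y : ℝ) : ℂ)

namespace VM
open Metric

lemma logDeriv_bound {f : ℂ → ℂ} (hf : Differentiable ℂ f) {w : ℂ} {R M : ℝ} (hR : 0 < R)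
    (hM : 0 < M) (hne : ∀ z ∈ ball w R, f z ≠ 0)
    (hb : ∀ z ∈ ball w R, ‖f z‖ ≤ Real.exp M * ‖f w‖) {z : ℂ} (hz : ‖z - w‖ ≤ 2 / 3 * R) :
    ‖deriv f z / f z‖ ≤ 60 * M / R := by
  have hd : DifferentiableOn ℂ (fun z => deriv f z / f z) (ball w R) := by
    intro x hx
    exact ((hf.deriv x).div (hf x) (hne x hx)).differentiableWithinAt
  obtain ⟨h, h0, hh⟩ := hd.isExactOn_ball.with_val_at w 0
  have hw : w ∈ ball w R := mem_ball_self hR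
  -- exp h = f / f w
  have hexp : ∀ x ∈ ball w R, f x * Complex.exp (-h x) = f w := by
    intro x hx
    have hder : ∀ y ∈ ball w R, HasDerivAt (fun y => f y * Complex.exp (-h y)) 0 y := by
      intro y hy
      have h1 := (hf y).hasDerivAt.mul ((hh y hy).neg.cexp)
      refine h1.congr_deriv ?_
      have := hne y hy
      change deriv f y * Complex.exp (-h y) +
        f y * (Complex.exp (-h y) * -(deriv f y / f y)) = 0
      field_simp
      ring
    have := (convex_ball w R).is_const_of_fderivWithin_eq_zero (𝕜 := ℂ)
      (f := fun y => f y * Complex.exp (-h y)) (fun y hy => (hder y hy).differentiableAt.differentiableWithinAt)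
      (fun y hy => by
        rw [fderivWithin_of_isOpen isOpen_ball hy]
        ext
        simp [(hder y hy).deriv]) hx hw
    simpa [h0] using this
  have hre : ∀ x ∈ ball w R, (h x).re ≤ M := by
    intro x hx
    have h1 : ‖f x‖ * Real.exp (-(h x).re) = ‖f w‖ := by
      rw [← hexp x hx, norm_mul, Complex.norm_exp]; simp
    have h2 : ‖f x‖ = ‖f w‖ * Real.exp ((h x).re) := by
      rw [← h1, mul_assoc, ← Real.exp_add]; simp
    have h3 := hb x hx
    rw [h2, mul_comm] at h3
    have h4 : 0 < ‖f w‖ := norm_pos_iff.mpr (hne w hw)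
    exact Real.exp_le_exp.mp (le_of_mul_le_mul_right h3 h4)
  have hbd : ∀ x, ‖x - w‖ ≤ 5 / 6 * R → ‖h x‖ ≤ 10 * M := by
    intro x hx
    have hmap : ∀ y ∈ ball (0 : ℂ) R, w + y ∈ ball w R := by
      intro y hy; simpa using hy
    have hxb : x - w ∈ ball (0 : ℂ) R := by
      rw [mem_ball_zero_iff]; linarith
    have := borelCaratheodory_zero (f := fun y => h (w + y)) hM (R := R) (z := x - w)
      (fun y hy => by
        have := (hh _ (hmap y hy)).differentiableAt
        exact (DifferentiableAt.comp y this (by fun_prop)).differentiableWithinAt)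
      (fun y hy => hre _ (hmap y hy)) hR hxb (by simpa using h0)
    simp only [add_sub_cancel] at this
    refine this.trans ?_
    rw [div_le_iff₀ (by linarith)]
    nlinarith
  have hzb : z ∈ ball w R := by rw [mem_ball_iff_norm]; linarith
  rw [← (hh z hzb).deriv]
  have := Complex.norm_deriv_le_of_forall_mem_sphere_norm_le (c := z) (R := R / 6) (C := 10 * M)
    (f := h) (by positivity) ?_ ?_
  · refine this.trans (le_of_eq ?_)
    field_simp; ring
  · apply DifferentiableOn.diffContOnCl
    intro y hy
    rw [closure_ball _ (by positivity)] at hy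
    refine (hh y ?_).differentiableAt.differentiableWithinAt
    rw [mem_ball_iff_norm]
    rw [mem_closedBall_iff_norm] at hy
    have := norm_sub_le_norm_sub_add_norm_sub y z w
    linarith
  · intro y hy
    apply hbd
    rw [mem_sphere_iff_norm] at hy
    have := norm_sub_le_norm_sub_add_norm_sub y z w
    linarith

lemma blaschke_step {f : ℂ → ℂ} (hf : Differentiable ℂ f) {w ρ : ℂ} {R B : ℝ} (hR : 0 < R)
    (hρ : f ρ = 0) (hρR : ‖w - ρ‖ < R) (hfw : f w ≠ 0)
    (hb : ∀ z ∈ closedBall w R, ‖f z‖ ≤ B) :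
    ∃ g : ℂ → ℂ, Differentiable ℂ g ∧ ‖g w‖ = ‖f w‖ * (R / ‖w - ρ‖) ∧
      (∀ z ∈ closedBall w R, ‖g z‖ ≤ B) ∧ (∀ z ∈ ball w R, g z = 0 → f z = 0) ∧
      deriv f w / f w = deriv g w / g w + (1 / (w - ρ) - (starRingEnd ℂ) (w - ρ) / R ^ 2) := by
  set d := dslope f ρ with hd
  have hdd : Differentiable ℂ d := by
    intro z
    have : DifferentiableOn ℂ d Set.univ :=
      (Complex.differentiableOn_dslope Filter.univ_mem).mpr hf.differentiableOn
    exact (this z trivial).differentiableAt Filter.univ_mem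
  have hfd : ∀ z, f z = (z - ρ) * d z := by
    intro z
    have := sub_smul_dslope f ρ z
    rw [hρ, sub_zero, smul_eq_mul] at this
    exact this.symm
  set v := w - ρ with hv
  have hv0 : v ≠ 0 := by
    intro h; apply hfw; rw [hfd, ← hv, h, zero_mul]
  have hvn : 0 < ‖v‖ := norm_pos_iff.mpr hv0
  have hRc : (R : ℂ) ≠ 0 := by exact_mod_cast hR.ne'
  set q : ℂ → ℂ := fun z => ((R : ℂ) ^ 2 + (starRingEnd ℂ) v * (z - w)) / R with hq
  have hqd : ∀ z, HasDerivAt q ((starRingEnd ℂ) v / R) z := by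
    intro z
    have := ((((hasDerivAt_id z).sub_const w).const_mul ((starRingEnd ℂ) v)).const_add
      ((R : ℂ)^2)).div_const (R : ℂ)
    simpa using this
  have hdw : d w ≠ 0 := by
    intro h; apply hfw; rw [hfd, h, mul_zero]
  have hqw : q w = R := by simp only [hq]; field_simp; simp
  have hgd : Differentiable ℂ (fun z => d z * q z) := fun z => (hdd z).mul (hqd z).differentiableAt
  refine ⟨fun z => d z * q z, hgd, ?_, ?_, ?_, ?_⟩
  · simp only [hqw]
    rw [hfd w, norm_mul, norm_mul, Complex.norm_real, Real.norm_of_nonneg hR.le, ← hv]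
    field_simp
  · intro z hz
    have hcl : closure (ball w R) = closedBall w R := closure_ball _ hR.ne'
    refine Complex.norm_le_of_forall_mem_frontier_norm_le (U := ball w R) isBounded_ball
      hgd.diffContOnCl ?_ (by rwa [hcl])
    intro y hy
    rw [frontier_ball _ hR.ne', mem_sphere_iff_norm] at hy
    have hyb : ‖f y‖ ≤ B := hb y (by rw [mem_closedBall_iff_norm]; exact hy.le)
    refine le_trans (le_of_eq ?_) hyb
    rw [hfd y, norm_mul, norm_mul, mul_comm]
    congr 1
    -- ‖q y‖ = ‖y - ρ‖
    have h1 : (R : ℂ) ^ 2 = (starRingEnd ℂ) (y - w) * (y - w) := by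
      rw [Complex.conj_mul', hy]
    simp only [hq]
    rw [h1, ← add_mul, ← map_add, norm_div, norm_mul, hy, Complex.norm_real,
      Real.norm_of_nonneg hR.le, RCLike.norm_conj, hv]
    rw [mul_div_assoc, div_self hR.ne', mul_one]
    congr 1; ring
  · intro z hz h
    rcases mul_eq_zero.mp h with h | h
    · rw [hfd, h, mul_zero]
    · exfalso
      simp only [hq] at h
      rw [div_eq_zero_iff] at h
      have h := h.resolve_right hRc
      have h2 : (R:ℂ)^2 = - ((starRingEnd ℂ) v * (z - w)) := by linear_combination h
      have h3 := congrArg norm h2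
      rw [norm_neg, norm_mul, norm_pow, Complex.norm_real, Real.norm_of_nonneg hR.le,
        RCLike.norm_conj] at h3
      rw [mem_ball_iff_norm] at hz
      have := norm_nonneg (z - w)
      nlinarith
  · have h1 : deriv f w = d w + v * deriv d w := by
      have : f = fun z => (z - ρ) * d z := funext hfd
      have h2 := ((hasDerivAt_id w).sub_const ρ).mul (hdd w).hasDerivAt
      rw [this]
      refine h2.deriv.trans ?_
      simp [hv]
    have h2 : deriv (fun z => d z * q z) w = deriv d w * R + d w * ((starRingEnd ℂ) v / R) := by
      have := ((hdd w).hasDerivAt.mul (hqd w)).deriv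
      rw [hqw] at this
      exact this
    rw [h2, h1, hfd w]
    simp only [hqw]
    rw [← hv]
    field_simp
    ring

lemma re_term_nonneg {v : ℂ} {R : ℝ} (hv : 0 ≤ v.re) (hvR : ‖v‖ ≤ R) (hv0 : v ≠ 0) :
    0 ≤ (1 / v - (starRingEnd ℂ) v / R ^ 2).re := by
  have h1 : (1 / v - (starRingEnd ℂ) v / R ^ 2).re = v.re * (1 / ‖v‖ ^ 2 - 1 / R ^ 2) := by
    rw [sub_re, one_div, inv_re, Complex.normSq_eq_norm_sq]
    have : (starRingEnd ℂ) v / (R:ℂ) ^ 2 = (starRingEnd ℂ) v / ((R ^ 2 : ℝ) : ℂ) := by push_cast; rfl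
    rw [this, Complex.div_ofReal_re, conj_re]; ring
  rw [h1]
  have : 0 < ‖v‖ := norm_pos_iff.mpr hv0
  apply mul_nonneg hv
  rw [sub_nonneg]
  gcongr

lemma neg_re_logDeriv_le_aux (N : ℕ) : ∀ {f : ℂ → ℂ} (_ : Differentiable ℂ f) {w : ℂ} {R M : ℝ}
    (_ : 0 < R) (_ : 0 < M) (_ : f w ≠ 0) (_ : Real.exp M < 2 ^ N)
    (_ : ∀ z ∈ ball w R, f z = 0 → z.re ≤ w.re)
    (_ : ∀ z ∈ closedBall w R, ‖f z‖ ≤ Real.exp M * ‖f w‖),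
    -(deriv f w / f w).re ≤ 120 * M / R := by
  induction N with
  | zero =>
    intro f hf w R M hR hM hfw hN
    exfalso
    have := Real.one_lt_exp_iff.mpr hM
    simp at hN; linarith
  | succ N ih =>
    intro f hf w R M hR hM hfw hN hz hb
    by_cases hnz : ∀ z ∈ ball w (R / 2), f z ≠ 0
    · have := logDeriv_bound hf (w := w) (R := R / 2) (by positivity) hM hnz
        (fun z hz => hb z (ball_subset_closedBall.trans (closedBall_subset_closedBall (by linarith)) hz))
        (z := w) (by simp; positivity)
      have h2 := Complex.abs_re_le_norm (deriv f w / f w)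
      have h3 := neg_abs_le (deriv f w / f w).re
      calc _ ≤ 60 * M / (R / 2) := by linarith
        _ = _ := by field_simp; norm_num
    · push Not at hnz
      obtain ⟨ρ, hρ, hρ0⟩ := hnz
      rw [mem_ball_iff_norm, norm_sub_rev] at hρ
      obtain ⟨g, hg, hgw, hgb, hgz, hgf⟩ := blaschke_step hf hR hρ0 (by linarith) hfw hb
      have hv0 : w - ρ ≠ 0 := by
        intro h; rw [sub_eq_zero] at h; exact hfw (h ▸ hρ0)
      have hvn : 0 < ‖w - ρ‖ := norm_pos_iff.mpr hv0
      have h2 : 2 ≤ R / ‖w - ρ‖ := by rw [le_div_iff₀ hvn]; linarith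
      have hfn : 0 < ‖f w‖ := norm_pos_iff.mpr hfw
      have hgn : 2 * ‖f w‖ ≤ ‖g w‖ := by rw [hgw]; nlinarith
      have hgpos : 0 < ‖g w‖ := by linarith
      -- new M
      have hM' : Real.exp M * ‖f w‖ ≤ Real.exp M / 2 * ‖g w‖ := by
        have := Real.exp_pos M; nlinarith
      have hwle : ‖g w‖ ≤ Real.exp M * ‖f w‖ := hgb w (mem_closedBall_self hR.le)
      have hle : -(deriv g w / g w).re ≤ 120 * M / R := by
        by_cases hM2 : 0 < M - Real.log 2
        · have := ih hg (w := w) (R := R) (M := M - Real.log 2) hR hM2 (norm_pos_iff.mp hgpos)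
            (by rw [Real.exp_sub, Real.exp_log (by norm_num), div_lt_iff₀ (by norm_num)]; rw [pow_succ] at hN; exact hN)
            (fun z hzb h0 => hz z hzb (hgz z hzb h0))
            (fun z hzb => by
              rw [Real.exp_sub, Real.exp_log (by norm_num)]
              exact (hgb z hzb).trans hM')
          refine this.trans ?_
          gcongr
          have := Real.log_pos (by norm_num : (1:ℝ) < 2)
          linarith
        · -- exp M ≤ 2 : then g has no zeros in ball R/2
          have hexp2 : Real.exp M ≤ 2 := by
            have : M ≤ Real.log 2 := by linarith
            calc Real.exp M ≤ Real.exp (Real.log 2) := Real.exp_le_exp.mpr this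
              _ = 2 := Real.exp_log (by norm_num)
          have hgnz : ∀ z ∈ ball w (R / 2), g z ≠ 0 := by
            intro ρ' hρ' h0
            rw [mem_ball_iff_norm, norm_sub_rev] at hρ'
            obtain ⟨g2, hg2, hg2w, hg2b, -, -⟩ := blaschke_step hg hR h0 (by linarith)
              (norm_pos_iff.mp hgpos) hgb
            have hv0' : w - ρ' ≠ 0 := by
              intro h; rw [sub_eq_zero] at h
              exact (norm_pos_iff.mp hgpos) (h ▸ h0)
            have hvn' : 0 < ‖w - ρ'‖ := norm_pos_iff.mpr hv0'
            have h2' : 2 < R / ‖w - ρ'‖ := by rw [lt_div_iff₀ hvn']; linarith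
            have h5 : ‖g2 w‖ ≤ Real.exp M * ‖f w‖ := hg2b w (mem_closedBall_self hR.le)
            rw [hg2w] at h5
            nlinarith
          have := logDeriv_bound hg (w := w) (R := R / 2) (by positivity) hM hgnz
            (fun z hz => (hgb z (ball_subset_closedBall.trans (closedBall_subset_closedBall (by linarith)) hz)).trans (by have := Real.exp_pos M; nlinarith))
            (z := w) (by simp; positivity)
          have h2 := Complex.abs_re_le_norm (deriv g w / g w)
          have h3 := neg_abs_le (deriv g w / g w).re
          calc _ ≤ 60 * M / (R / 2) := by linarith
            _ = _ := by field_simp; norm_num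
      rw [hgf, add_re, neg_add]
      have := re_term_nonneg (v := w - ρ) (R := R)
        (by rw [sub_re, sub_nonneg]; exact hz ρ (by rw [mem_ball_iff_norm, norm_sub_rev]; linarith) hρ0)
        (by linarith) hv0
      linarith

lemma neg_re_logDeriv_le {f : ℂ → ℂ} (hf : Differentiable ℂ f) {w : ℂ} {R M : ℝ}
    (hR : 0 < R) (hM : 0 < M) (hfw : f w ≠ 0)
    (hz : ∀ z ∈ ball w R, f z = 0 → z.re ≤ w.re)
    (hb : ∀ z ∈ closedBall w R, ‖f z‖ ≤ Real.exp M * ‖f w‖) :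
    -(deriv f w / f w).re ≤ 120 * M / R := by
  obtain ⟨N, hN⟩ := pow_unbounded_of_one_lt (Real.exp M) (by norm_num : (1:ℝ) < 2)
  exact neg_re_logDeriv_le_aux N hf hR hM hfw hN hz hb

lemma neg_re_logDeriv_le_zero {f : ℂ → ℂ} (hf : Differentiable ℂ f) {w ρ : ℂ} {R M : ℝ}
    (hR : 0 < R) (hM : 0 < M) (hfw : f w ≠ 0)
    (hz : ∀ z ∈ ball w R, f z = 0 → z.re ≤ w.re)
    (hb : ∀ z ∈ closedBall w R, ‖f z‖ ≤ Real.exp M * ‖f w‖)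
    (hρ : f ρ = 0) (hρR : ‖w - ρ‖ < R) :
    -(deriv f w / f w).re ≤ 120 * M / R - (1 / (w - ρ) - (starRingEnd ℂ) (w - ρ) / R ^ 2).re := by
  obtain ⟨g, hg, hgw, hgb, hgz, hgf⟩ := blaschke_step hf hR hρ hρR hfw hb
  have hv0 : w - ρ ≠ 0 := by
    intro h; rw [sub_eq_zero] at h; exact hfw (h ▸ hρ)
  have hvn : 0 < ‖w - ρ‖ := norm_pos_iff.mpr hv0
  have h2 : 1 ≤ R / ‖w - ρ‖ := by rw [le_div_iff₀ hvn]; linarith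
  have hfn : 0 < ‖f w‖ := norm_pos_iff.mpr hfw
  have hgn : ‖f w‖ ≤ ‖g w‖ := by rw [hgw]; nlinarith
  have := neg_re_logDeriv_le hg (w := w) hR hM (norm_pos_iff.mp (by linarith))
    (fun z hzb h0 => hz z hzb (hgz z hzb h0))
    (fun z hzb => (hgb z hzb).trans (by gcongr))
  rw [hgf, add_re]
  linarith
end VM

namespace VM
open Metric Filter Topology MeasureTheory

/-- `(s-1) ζ(s)`, as an entire function. -/
noncomputable def Q : ℂ → ℂ := Function.update (fun s => (s - 1) * riemannZeta s) 1 1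

/-- `ζ(s) - 1/(s-1)`, as an entire function. -/
noncomputable def Z : ℂ → ℂ := dslope Q 1

lemma Q_one : Q 1 = 1 := by simp [Q]

lemma Q_of_ne {s : ℂ} (hs : s ≠ 1) : Q s = (s - 1) * riemannZeta s := by simp [Q, hs]

lemma Q_diff : Differentiable ℂ Q := by
  have h1 : ∀ z : ℂ, z ≠ 1 → DifferentiableAt ℂ Q z := by
    intro z hz
    have : DifferentiableAt ℂ (fun s => (s - 1) * riemannZeta s) z :=
      (by fun_prop : DifferentiableAt ℂ (fun s : ℂ => s - 1) z).mul (differentiableAt_riemannZeta hz)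
    refine this.congr_of_eventuallyEq ?_
    filter_upwards [eventually_ne_nhds hz] with t ht using Q_of_ne ht
  have h2 : ContinuousAt Q 1 := by
    rw [Q, continuousAt_update_same]
    exact riemannZeta_residue_one
  intro z
  by_cases hz : z = 1
  · subst hz
    exact (Complex.analyticAt_of_differentiable_on_punctured_nhds_of_continuousAt
      (eventually_nhdsWithin_of_forall h1) h2).differentiableAt
  · exact h1 z hz

lemma dslope_diff {f : ℂ → ℂ} (hf : Differentiable ℂ f) (a : ℂ) : Differentiable ℂ (dslope f a) := by
  intro z
  have : DifferentiableOn ℂ (dslope f a) Set.univ :=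
    (Complex.differentiableOn_dslope Filter.univ_mem).mpr hf.differentiableOn
  exact (this z trivial).differentiableAt Filter.univ_mem

lemma Z_diff : Differentiable ℂ Z := dslope_diff Q_diff 1

lemma Q_eq (s : ℂ) : Q s = 1 + (s - 1) * Z s := by
  have := sub_smul_dslope Q 1 s
  rw [Q_one, smul_eq_mul] at this
  rw [Z, this]; ring

lemma Z_of_ne {s : ℂ} (hs : s ≠ 1) : Z s = riemannZeta s - 1 / (s - 1) := by
  have h := Q_eq s
  rw [Q_of_ne hs] at h
  have : s - 1 ≠ 0 := sub_ne_zero.mpr hs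
  field_simp
  linear_combination -h

lemma zeta_eq {s : ℂ} (hs : s ≠ 1) : riemannZeta s = 1 / (s - 1) + Z s := by
  rw [Z_of_ne hs]; ring

lemma Q_ne_zero {s : ℂ} (hs : 1 ≤ s.re) : Q s ≠ 0 := by
  by_cases h : s = 1
  · subst h; rw [Q_one]; exact one_ne_zero
  · rw [Q_of_ne h]
    exact mul_ne_zero (sub_ne_zero.mpr h) (riemannZeta_ne_zero_of_one_le_re hs)

/-- fractional part restricted to `t > 1` -/
noncomputable def fr : ℝ → ℂ := fun t => if 1 < t then ((Int.fract t : ℝ) : ℂ) else 0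

lemma fr_bound (t : ℝ) : ‖fr t‖ ≤ 1 := by
  unfold fr
  split_ifs
  · rw [Complex.norm_real, Real.norm_of_nonneg (Int.fract_nonneg t)]
    exact (Int.fract_lt_one t).le
  · simp

lemma fr_meas : Measurable fr := by
  unfold fr
  exact Measurable.ite measurableSet_Ioi (Complex.measurable_ofReal.comp measurable_fract)
    measurable_const

lemma fr_loc : LocallyIntegrableOn fr (Set.Ioi 0) := by
  apply LocallyIntegrable.locallyIntegrableOn
  have : LocallyIntegrable (fun _ : ℝ => (1:ℝ)) := locallyIntegrable_const _
  refine this.mono fr_meas.aestronglyMeasurable (Filter.Eventually.of_forall ?_)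
  intro t; simpa using fr_bound t

lemma fr_top : fr =O[atTop] (fun t : ℝ => t ^ (-(0:ℝ))) := by
  simp only [neg_zero, Real.rpow_zero]
  exact Asymptotics.IsBigO.of_bound 1 (Filter.Eventually.of_forall fun t => by simpa using fr_bound t)

lemma fr_bot (b : ℝ) : fr =O[𝓝[>] 0] (fun t : ℝ => t ^ (-b)) := by
  refine Asymptotics.IsBigO.of_bound 0 ?_
  have : Set.Iio (1:ℝ) ∈ 𝓝 (0:ℝ) := Iio_mem_nhds one_pos
  filter_upwards [mem_nhdsWithin_of_mem_nhds this] with t ht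
  have : ¬ (1 < t) := not_lt.mpr (le_of_lt ht)
  simp [fr, this]

lemma fr_mellin_diff {s : ℂ} (hs : s.re < 0) : DifferentiableAt ℂ (mellin fr) s :=
  mellin_differentiableAt_of_isBigO_rpow fr_loc fr_top hs (fr_bot (s.re - 1)) (by linarith)

lemma fr_mellin_conv {s : ℂ} (hs : s.re < 0) : MellinConvergent fr s :=
  mellinConvergent_of_isBigO_rpow fr_loc fr_top hs (fr_bot (s.re - 1)) (by linarith)

lemma fr_mellin_eq (s : ℂ) : mellin fr s = ∫ t in Set.Ioi (1:ℝ), ((Int.fract t : ℝ) : ℂ) * (t:ℂ) ^ (s - 1) := by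
  rw [mellin]
  have h : ∀ t : ℝ, (t:ℂ) ^ (s - 1) • fr t =
      Set.indicator (Set.Ioi 1) (fun t : ℝ => ((Int.fract t : ℝ) : ℂ) * (t:ℂ) ^ (s - 1)) t := by
    intro t
    by_cases ht : 1 < t
    · simp [fr, ht, mul_comm]
    · simp [fr, ht]
  simp_rw [h]
  rw [setIntegral_indicator measurableSet_Ioi]
  congr 2
  ext t; simp only [Set.mem_inter_iff, Set.mem_Ioi]; constructor
  · exact fun h => h.2
  · exact fun h => ⟨by linarith, h⟩

lemma fr_mellin_bound {s : ℂ} (hs : s.re ≤ -(1/2)) : ‖mellin fr s‖ ≤ 2 := by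
  rw [fr_mellin_eq]
  have hIntg : IntegrableOn (fun t : ℝ => t ^ (s.re - 1)) (Set.Ioi 1) :=
    integrableOn_Ioi_rpow_of_lt (by linarith) one_pos
  calc _ ≤ ∫ t in Set.Ioi (1:ℝ), t ^ (s.re - 1) := by
        refine norm_integral_le_of_norm_le hIntg ?_
        refine (ae_restrict_iff' measurableSet_Ioi).mpr (Filter.Eventually.of_forall fun t ht => ?_)
        have ht0 : (0:ℝ) < t := lt_trans one_pos ht
        rw [norm_mul, Complex.norm_cpow_eq_rpow_re_of_pos ht0, Complex.norm_real,
          Real.norm_of_nonneg (Int.fract_nonneg t), sub_re, one_re]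
        have := (Int.fract_lt_one t).le
        have := Real.rpow_nonneg ht0.le (s.re - 1)
        nlinarith
    _ = -1 / s.re := by
        rw [integral_Ioi_rpow_of_lt (by linarith) one_pos]; simp
    _ ≤ 2 := by
        rw [div_le_iff_of_neg (by linarith)]; linarith

lemma Z_eq_mellin_aux {s : ℂ} (hs : 1 < s.re) : Z s = 1 - s * mellin fr (-s) := by
  have hs1 : s ≠ 1 := by rintro rfl; simp at hs
  have h0 : s - 1 ≠ 0 := sub_ne_zero.mpr hs1
  have h1 : riemannZeta s = s * ∫ t in Set.Ioi (1 : ℝ), (∑ k ∈ Icc 1 ⌊t⌋₊, (1:ℂ)) * t ^ (-(s + 1)) := by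
    rw [← LSeries_one_eq_riemannZeta hs]
    refine LSeries_eq_mul_integral (fun _ => 1) (r := 1) zero_le_one hs
      (LSeriesSummable_one_iff.mpr hs) ?_
    refine Asymptotics.IsBigO.of_bound 1 (Filter.Eventually.of_forall fun n => ?_)
    simp
  have hfi : IntegrableOn (fun t : ℝ => ((Int.fract t : ℝ) : ℂ) * (t:ℂ) ^ (-s - 1)) (Set.Ioi 1) := by
    have := (fr_mellin_conv (s := -s) (by simp; linarith))
    rw [MellinConvergent] at this
    have h2 := this.mono_set (Set.Ioi_subset_Ioi (zero_le_one (α := ℝ)))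
    refine h2.congr_fun (fun t ht => ?_) measurableSet_Ioi
    simp only [Set.mem_Ioi] at ht
    simp [fr, ht, mul_comm]
  have hti : IntegrableOn (fun t : ℝ => (t:ℂ) ^ (-s)) (Set.Ioi 1) :=
    integrableOn_Ioi_cpow_of_lt (by simpa using hs) one_pos
  have h2 : ∫ t in Set.Ioi (1 : ℝ), (∑ k ∈ Icc 1 ⌊t⌋₊, (1:ℂ)) * (t:ℂ) ^ (-(s + 1)) =
      (∫ t in Set.Ioi (1 : ℝ), (t:ℂ) ^ (-s)) - ∫ t in Set.Ioi (1 : ℝ), ((Int.fract t : ℝ) : ℂ) * (t:ℂ) ^ (-s - 1) := by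
    rw [← integral_sub hti hfi]
    refine setIntegral_congr_fun measurableSet_Ioi fun t ht => ?_
    have ht0 : (0:ℝ) < t := lt_trans one_pos ht
    have ht0' : (t:ℂ) ≠ 0 := by exact_mod_cast ht0.ne'
    have e1 : (t:ℂ) ^ (-s) = t * (t:ℂ) ^ (-s - 1) := by
      rw [Complex.cpow_sub _ _ ht0', Complex.cpow_one]; field_simp
    have e2 : ((⌊t⌋₊ : ℝ) : ℂ) = (t : ℂ) - ((Int.fract t : ℝ) : ℂ) := by
      rw [← Complex.ofReal_sub]
      congr 1
      rw [natCast_floor_eq_intCast_floor ht0.le, Int.fract]; ring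
    simp only [Finset.sum_const, Nat.card_Icc, add_tsub_cancel_right, nsmul_eq_mul, mul_one]
    rw [e1, show -(s+1) = -s - 1 by ring, ← sub_mul, ← e2]; simp
  rw [Z_of_ne hs1, h1, h2, fr_mellin_eq, integral_Ioi_cpow_of_lt (by simpa using hs) one_pos]
  simp only [Complex.ofReal_one, Complex.one_cpow]
  have : -s + 1 ≠ 0 := by intro h; apply h0; linear_combination -h
  field_simp
  ring

lemma Z_eq_mellin {s : ℂ} (hs : 0 < s.re) : Z s = 1 - s * mellin fr (-s) := by
  have hopen : IsOpen {s : ℂ | 0 < s.re} := isOpen_lt continuous_const Complex.continuous_re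
  have hconv : Convex ℝ {s : ℂ | 0 < s.re} := convex_halfSpace_re_gt 0
  have hg : DifferentiableOn ℂ (fun s => 1 - s * mellin fr (-s)) {s : ℂ | 0 < s.re} := by
    intro z hz
    have h1 : DifferentiableAt ℂ (fun s => mellin fr (-s)) z :=
      DifferentiableAt.comp (g := mellin fr) (f := fun s : ℂ => -s) z
        (fr_mellin_diff (s := -z) (by simpa using hz)) (by fun_prop)
    exact ((differentiableAt_const _).sub (differentiableAt_id.mul h1)).differentiableWithinAt
  refine AnalyticOnNhd.eqOn_of_preconnected_of_eventuallyEq (Z_diff.differentiableOn.analyticOnNhd hopen)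
    (hg.analyticOnNhd hopen) hconv.isPreconnected (z₀ := 2) (by simp) ?_ hs
  have : {s : ℂ | 1 < s.re} ∈ 𝓝 (2:ℂ) :=
    (isOpen_lt continuous_const Complex.continuous_re).mem_nhds (by simp)
  filter_upwards [this] with z hz using Z_eq_mellin_aux hz

lemma Z_bound {s : ℂ} (hs : 1 / 2 ≤ s.re) : ‖Z s‖ ≤ 4 * ‖s‖ := by
  rw [Z_eq_mellin (by linarith)]
  have h1 := fr_mellin_bound (s := -s) (by simp; linarith)
  have h2 : 1 / 2 ≤ ‖s‖ := hs.trans (Complex.re_le_norm s)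
  calc _ ≤ ‖(1:ℂ)‖ + ‖s * mellin fr (-s)‖ := norm_sub_le _ _
    _ ≤ 1 + ‖s‖ * 2 := by rw [norm_mul, norm_one]; gcongr
    _ ≤ _ := by linarith

lemma norm_LSeries_le {f : ℕ → ℂ} {a : ℕ → ℝ} (hfa : ∀ n, ‖f n‖ ≤ a n) {s : ℂ} {σ : ℝ}
    (hσ : σ = s.re) (ha : LSeriesSummable (fun n => (a n : ℂ)) σ) :
    ‖LSeries f s‖ ≤ ‖LSeries (fun n => (a n : ℂ)) σ‖ := by
  have h1 : ∀ n, ‖LSeries.term f s n‖ ≤ ‖LSeries.term (fun n => (a n : ℂ)) σ n‖ := by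
    intro n
    refine (LSeries.norm_term_le s (g := fun n => (a n : ℂ)) ?_).trans
      (LSeries.norm_term_le_of_re_le_re _ (by simp [hσ]) n)
    rw [Complex.norm_real]
    exact (hfa n).trans (le_abs_self _)
  have h2 : ∀ n, LSeries.term (fun n => (a n : ℂ)) σ n
      = ((‖LSeries.term (fun n => (a n : ℂ)) σ n‖ : ℝ) : ℂ) := by
    intro n
    rcases eq_or_ne n 0 with rfl | hn
    · simp
    · rw [LSeries.term_of_ne_zero hn, ← Complex.ofReal_natCast, ← Complex.ofReal_cpow (by positivity),
        ← Complex.ofReal_div, Complex.norm_real, Real.norm_of_nonneg]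
      have := (norm_nonneg _).trans (hfa n)
      positivity
  have hs : Summable (fun n => ‖LSeries.term (fun n => (a n : ℂ)) σ n‖) := ha.norm
  rw [LSeries, LSeries, tsum_congr h2, ← Complex.ofReal_tsum, Complex.norm_real, Real.norm_of_nonneg (tsum_nonneg fun _ => norm_nonneg _)]
  exact tsum_of_norm_bounded hs.hasSum h1

lemma zeta_inv_le {s : ℂ} (hs : 1 < s.re) (hs2 : s.re ≤ 2) : (s.re - 1) / 9 ≤ ‖riemannZeta s‖ := by
  have h1 := LSeries_one_mul_Lseries_moebius hs
  rw [LSeries_one_eq_riemannZeta hs] at h1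
  have hsum : LSeriesSummable (fun n => (((1:ℝ)) : ℂ)) (s.re : ℂ) := by
    have := LSeriesSummable_one_iff (s := (s.re : ℂ)).mpr (by simpa using hs)
    simp only [Complex.ofReal_one]
    exact this
  have h2 := norm_LSeries_le (f := fun n => ((ArithmeticFunction.moebius n : ℤ) : ℂ)) (a := fun _ => 1) (s := s) (σ := s.re)
    (fun n => by
      rw [Complex.norm_intCast]
      exact_mod_cast ArithmeticFunction.abs_moebius_le_one) rfl hsum
  have h3 : LSeries (fun n => (((1:ℝ)) : ℂ)) (s.re : ℂ) = riemannZeta s.re := by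
    rw [← LSeries_one_eq_riemannZeta (s := (s.re : ℂ)) (by simpa using hs)]
    simp; rfl
  rw [h3] at h2
  have hne : (s.re : ℂ) ≠ 1 := by
    intro h; rw [← Complex.ofReal_one, Complex.ofReal_inj] at h; linarith
  have h4 : ‖riemannZeta s.re‖ ≤ 9 / (s.re - 1) := by
    rw [zeta_eq hne]
    have h5 := Z_bound (s := (s.re : ℂ)) (by simp; linarith)
    have h6 : ‖(1:ℂ) / ((s.re : ℂ) - 1)‖ = 1 / (s.re - 1) := by
      rw [← Complex.ofReal_one, ← Complex.ofReal_sub, ← Complex.ofReal_div, Complex.norm_real,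
        Real.norm_of_nonneg]
      have : 0 < s.re - 1 := by linarith
      positivity
    rw [Complex.norm_real, Real.norm_of_nonneg (by linarith)] at h5
    have h7 : (8:ℝ) ≤ 8 / (s.re - 1) := by
      rw [le_div_iff₀ (by linarith)]; linarith
    calc _ ≤ _ := norm_add_le _ _
      _ ≤ 1 / (s.re - 1) + 8 / (s.re - 1) := by rw [h6]; linarith
      _ = _ := by ring
  have h8 : 1 ≤ ‖riemannZeta s‖ * (9 / (s.re - 1)) := by
    have := congrArg norm h1
    rw [norm_mul, norm_one] at this
    refine this.symm.le.trans ?_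
    gcongr
    exact h2.trans h4
  have h9 : 0 < s.re - 1 := by linarith
  have h10 : ‖riemannZeta s‖ * (9 / (s.re - 1)) = ‖riemannZeta s‖ / ((s.re - 1) / 9) := by field_simp
  rw [h10, le_div_iff₀ (by positivity)] at h8
  linarith
end VM

namespace VM
open Metric Filter Topology MeasureTheory

lemma logDeriv_Q {s : ℂ} (hs : s ≠ 1) (hz : riemannZeta s ≠ 0) :
    deriv Q s / Q s = deriv riemannZeta s / riemannZeta s + 1 / (s - 1) := by
  have h0 : s - 1 ≠ 0 := sub_ne_zero.mpr hs
  have h1 : Q =ᶠ[𝓝 s] fun s => (s - 1) * riemannZeta s := by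
    filter_upwards [eventually_ne_nhds hs] with t ht using Q_of_ne ht
  have h2 := ((hasDerivAt_id s).sub_const 1).mul (differentiableAt_riemannZeta hs).hasDerivAt
  have h3 : deriv Q s = riemannZeta s + (s - 1) * deriv riemannZeta s := by
    rw [h1.deriv_eq]
    refine h2.deriv.trans ?_
    simp
  rw [h3, Q_of_ne hs]
  field_simp
  ring

lemma three_four_one {σ : ℝ} (hσ : 1 < σ) (t : ℝ) :
    0 ≤ 3 * (-(deriv riemannZeta σ / riemannZeta σ)).re
      + 4 * (-(deriv riemannZeta (σ + t * I) / riemannZeta (σ + t * I))).re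
      + (-(deriv riemannZeta (σ + (2 * t : ℝ) * I) / riemannZeta (σ + (2 * t : ℝ) * I))).re := by
  have key : ∀ u : ℝ, -(deriv riemannZeta (σ + u * I) / riemannZeta (σ + u * I)) =
      LSeries (fun n => (ArithmeticFunction.vonMangoldt n : ℂ)) (σ + u * I) := by
    intro u
    rw [ArithmeticFunction.LSeries_vonMangoldt_eq_deriv_riemannZeta_div (by simpa using hσ)]
    ring
  have hsum : ∀ u : ℝ, HasSum (fun n => (LSeries.term (fun n => (ArithmeticFunction.vonMangoldt n : ℂ)) (σ + u * I) n).re)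
      ((-(deriv riemannZeta (σ + u * I) / riemannZeta (σ + u * I))).re) := by
    intro u
    rw [key u]
    exact Complex.hasSum_re (ArithmeticFunction.LSeriesSummable_vonMangoldt (s := σ + u * I)
      (by simpa using hσ)).LSeriesHasSum
  have h0 := hsum 0
  have h1 := hsum t
  have h2 := hsum (2 * t)
  simp only [ofReal_zero, zero_mul, add_zero] at h0
  have h3 := ((h0.mul_left 3).add (h1.mul_left 4)).add h2
  refine h3.nonneg ?_
  intro n
  rcases eq_or_ne n 0 with rfl | hn
  · simp
  have hnc : (n:ℂ) ≠ 0 := by exact_mod_cast hn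
  have hn0 : (0:ℝ) < n := by exact_mod_cast Nat.pos_of_ne_zero hn
  simp only [LSeries.term_of_ne_zero hn]
  set z : ℂ := (n:ℂ) ^ (-((t:ℂ) * I)) with hz
  have hzn : ‖z‖ = 1 := by
    rw [hz, ← Complex.ofReal_natCast, Complex.norm_cpow_eq_rpow_re_of_pos hn0]; simp
  set a : ℝ := ArithmeticFunction.vonMangoldt n / (n:ℝ) ^ σ with ha
  have ha0 : 0 ≤ a := div_nonneg ArithmeticFunction.vonMangoldt_nonneg (Real.rpow_nonneg hn0.le _)
  have e0 : (ArithmeticFunction.vonMangoldt n : ℂ) / (n:ℂ) ^ (σ:ℂ) = a := by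
    rw [ha, Complex.ofReal_div, Complex.ofReal_cpow hn0.le]; simp
  have e1 : (ArithmeticFunction.vonMangoldt n : ℂ) / (n:ℂ) ^ (σ + t * I : ℂ) = a * z := by
    rw [Complex.cpow_add _ _ hnc, ← div_div, e0, hz, Complex.cpow_neg]; rfl
  have e2 : (ArithmeticFunction.vonMangoldt n : ℂ) / (n:ℂ) ^ (σ + (2 * t : ℝ) * I : ℂ) = a * z ^ 2 := by
    rw [Complex.cpow_add _ _ hnc, ← div_div, e0, hz, Complex.cpow_neg, inv_pow, ← Complex.cpow_nat_mul, div_eq_mul_inv]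
    congr 3; push_cast; ring
  rw [e0, e1, e2, Complex.re_ofReal_mul, Complex.re_ofReal_mul, Complex.ofReal_re]
  have h5 : (z ^ 2).re = z.re * z.re - z.im * z.im := by rw [pow_two, Complex.mul_re]
  have h6 : z.re * z.re + z.im * z.im = 1 := by
    have := Complex.normSq_eq_norm_sq z
    rw [hzn, Complex.normSq_apply] at this; linarith
  rw [h5]
  have h7 : 3 * a + 4 * (a * z.re) + a * (z.re * z.re - z.im * z.im) = a * (2 * (1 + z.re) ^ 2) := by
    linear_combination a * (- h6)
  rw [h7]
  positivity

lemma Q_upper {z : ℂ} {T : ℝ} (hT : 10 ≤ T) (h1 : 1 / 2 ≤ z.re) (h2 : z.re ≤ 3) (h3 : |z.im| ≤ 3 * T) :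
    ‖Q z‖ ≤ T ^ 4 := by
  rw [Q_eq]
  have h4 : ‖z‖ ≤ 4 * T := by
    have := Complex.norm_le_abs_re_add_abs_im z
    rw [abs_of_nonneg (by linarith : 0 ≤ z.re)] at this
    linarith
  have h5 : ‖z - 1‖ ≤ 4 * T := by
    have := Complex.norm_le_abs_re_add_abs_im (z - 1)
    have h6 : |z.re - 1| ≤ 2 := by rw [abs_le]; constructor <;> linarith
    simp only [sub_re, one_re, sub_im, one_im, sub_zero] at this
    linarith
  calc _ ≤ ‖(1:ℂ)‖ + ‖(z - 1) * Z z‖ := norm_add_le _ _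
    _ ≤ 1 + (4 * T) * (4 * (4 * T)) := by
        rw [norm_mul, norm_one]
        gcongr
        exact (Z_bound h1).trans (by linarith)
    _ ≤ T ^ 4 := by
        have h8 : 100 ≤ T ^ 2 := by nlinarith
        have h9 : T ^ 4 = (T ^ 2) ^ 2 := by ring
        rw [h9]; nlinarith

lemma Q_lower {w : ℂ} (h1 : 1 < w.re) (h2 : w.re ≤ 2) : (w.re - 1) ^ 2 / 9 ≤ ‖Q w‖ := by
  have hw : w ≠ 1 := by rintro rfl; simp at h1
  rw [Q_of_ne hw, norm_mul]
  have h3 : w.re - 1 ≤ ‖w - 1‖ := by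
    have := Complex.re_le_norm (w - 1); simpa using this
  have h4 := zeta_inv_le h1 h2
  have : 0 < w.re - 1 := by linarith
  calc _ = (w.re - 1) * ((w.re - 1) / 9) := by ring
    _ ≤ _ := by gcongr

lemma Q_ratio {w z : ℂ} {T : ℝ} (hT : 10 ≤ T) (hw1 : 1 + 1 / T ≤ w.re) (hw2 : w.re ≤ 2)
    (h1 : 1 / 2 ≤ z.re) (h2 : z.re ≤ 3) (h3 : |z.im| ≤ 3 * T) :
    ‖Q z‖ ≤ Real.exp (7 * Real.log T) * ‖Q w‖ := by
  have hT0 : 0 < T := by linarith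
  have h4 : Real.exp (7 * Real.log T) = T ^ 7 := by
    rw [mul_comm, Real.exp_mul, Real.exp_log hT0]; norm_cast
  have hT1 : 0 < 1 / T := by positivity
  have h5 := Q_lower (w := w) (by linarith) hw2
  have h6 : (1 / T) ^ 2 / 9 ≤ ‖Q w‖ := by
    refine le_trans ?_ h5
    gcongr; linarith
  rw [h4]
  calc ‖Q z‖ ≤ T ^ 4 := Q_upper hT h1 h2 h3
    _ ≤ T ^ 7 * ((1 / T) ^ 2 / 9) := by
      have : T ^ 7 * ((1 / T) ^ 2 / 9) = T ^ 4 * (T / 9) := by field_simp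
      rw [this]
      have : 1 ≤ T / 9 := by linarith
      have : 0 < T ^ 4 := by positivity
      nlinarith
    _ ≤ _ := by gcongr

lemma zero_free_aux {T t β : ℝ} (hT : 10 ≤ T) (hT2 : 28000 * Real.log T ≤ T) (ht1 : 1 ≤ |t|)
    (htT : |t| ≤ T) (h0 : Q (β + t * I) = 0) : β ≤ 1 - 1 / (196000 * Real.log T) := by
  set L := Real.log T with hL
  have hT0 : 0 < T := by linarith
  have hL1 : 1 ≤ L := by
    rw [hL, Real.le_log_iff_exp_le hT0]
    have := Real.exp_one_lt_d9; linarith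
  set η := 1 / (28000 * L) with hη
  have hη0 : 0 < η := by positivity
  have hηT : 1 / T ≤ η := by rw [hη]; gcongr
  have hη1 : η ≤ 1 / 100 := by
    rw [hη]; gcongr; linarith
  by_contra hβ
  push Not at hβ
  have hβ1 : β < 1 := by
    by_contra h
    push Not at h
    exact Q_ne_zero (s := β + t * I) (by simpa using h) h0
  have hs7 : 1 / (196000 * L) = η / 7 := by rw [hη]; field_simp; norm_num
  rw [hs7] at hβ
  set σ := 1 + η with hσ
  have hσ1 : 1 < σ := by linarith
  -- general bound
  have hgen : ∀ u : ℝ, |u| ≤ 2 * T → ∀ z ∈ closedBall ((σ:ℂ) + u * I) (1/2),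
      ‖Q z‖ ≤ Real.exp (7 * L) * ‖Q ((σ:ℂ) + u * I)‖ := by
    intro u hu z hz
    rw [mem_closedBall_iff_norm] at hz
    have a1 := (Complex.abs_re_le_norm _).trans hz
    have a2 := (Complex.abs_im_le_norm _).trans hz
    simp at a1 a2
    rw [abs_le] at a1 a2 hu
    have hηT' : T⁻¹ ≤ η := by rw [← one_div]; exact hηT
    refine Q_ratio hT (by simp; linarith) (by simp; linarith) (by linarith) (by linarith) ?_
    rw [abs_le]; constructor <;> linarith
  have hzeros : ∀ u : ℝ, ∀ z ∈ ball ((σ:ℂ) + u * I) (1/2), Q z = 0 → z.re ≤ ((σ:ℂ) + u * I).re := by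
    intro u z _ hz
    by_contra h
    push Not at h
    simp at h
    exact Q_ne_zero (s := z) (by linarith) hz
  have hQne : ∀ u : ℝ, Q ((σ:ℂ) + u * I) ≠ 0 := fun u => Q_ne_zero (by simp; linarith)
  have b1 : ∀ u : ℝ, |u| ≤ 2 * T → -(deriv Q ((σ:ℂ) + u * I) / Q ((σ:ℂ) + u * I)).re ≤ 1680 * L := by
    intro u hu
    have := neg_re_logDeriv_le Q_diff (w := (σ:ℂ) + u * I) (R := 1/2) (M := 7 * L) (by norm_num)
      (by linarith) (hQne u) (hzeros u) (hgen u hu)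
    linarith
  have b2 : -(deriv Q ((σ:ℂ) + t * I) / Q ((σ:ℂ) + t * I)).re ≤ 1680 * L - (1 / (σ - β) - 2) := by
    have hv : ((σ:ℂ) + t * I) - (β + t * I) = ((σ - β : ℝ) : ℂ) := by push_cast; ring
    have hv0 : 0 < σ - β := by linarith
    have hv1 : σ - β < 1 / 2 := by linarith
    have := neg_re_logDeriv_le_zero Q_diff (w := (σ:ℂ) + t * I) (R := 1/2) (M := 7 * L) (by norm_num)
      (by linarith) (hQne t) (hzeros t) (hgen t (by linarith)) h0
      (by rw [hv, Complex.norm_real, Real.norm_of_nonneg hv0.le]; exact hv1)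
    rw [hv] at this
    have e : (1 / ((σ - β : ℝ) : ℂ) - (starRingEnd ℂ) ((σ - β : ℝ) : ℂ) / (((1/2 : ℝ)) : ℂ) ^ 2).re
        = 1 / (σ - β) - 4 * (σ - β) := by
      rw [Complex.conj_ofReal]
      have : (1 / ((σ - β : ℝ) : ℂ) - ((σ - β : ℝ) : ℂ) / (((1/2 : ℝ)) : ℂ) ^ 2) =
        ((1 / (σ - β) - 4 * (σ - β) : ℝ) : ℂ) := by push_cast; ring
      rw [this, Complex.ofReal_re]
    rw [e] at this
    linarith
  -- conversion
  have conv : ∀ u : ℝ, (-(deriv riemannZeta ((σ:ℂ) + u * I) / riemannZeta ((σ:ℂ) + u * I))).re =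
      -(deriv Q ((σ:ℂ) + u * I) / Q ((σ:ℂ) + u * I)).re + (1 / ((σ:ℂ) + u * I - 1)).re := by
    intro u
    have hne : (σ:ℂ) + u * I ≠ 1 := by
      intro h; have := congrArg Complex.re h; simp at this; linarith
    rw [logDeriv_Q hne (riemannZeta_ne_zero_of_one_le_re (by simp; linarith))]
    simp
  have c1 : ∀ u : ℝ, 1 ≤ |u| → (1 / ((σ:ℂ) + u * I - 1)).re ≤ 1 := by
    intro u hu
    refine (Complex.re_le_norm _).trans ?_
    rw [norm_div, norm_one, div_le_one₀]
    · have := Complex.abs_im_le_norm ((σ:ℂ) + u * I - 1)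
      simp at this; linarith
    · have := Complex.abs_im_le_norm ((σ:ℂ) + u * I - 1)
      simp at this; linarith
  have c0 : (1 / ((σ:ℂ) + (0:ℝ) * I - 1)).re = 1 / η := by
    have : (1 / ((σ:ℂ) + (0:ℝ) * I - 1)) = ((1 / η : ℝ) : ℂ) := by
      rw [hσ]; push_cast; ring
    rw [this, Complex.ofReal_re]
  have h341 := three_four_one hσ1 t
  have d0 := conv 0
  have e0 := b1 0 (by simp; linarith)
  have d1 := conv t
  have d2 := conv (2 * t)
  have e2 := b1 (2 * t) (by rw [abs_mul]; norm_num; linarith)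
  have f1 := c1 t ht1
  have f2 := c1 (2 * t) (by rw [abs_mul]; norm_num; linarith)
  rw [c0] at d0
  simp only [Complex.ofReal_zero, zero_mul, add_zero] at d0 e0
  rw [d0, d1, d2] at h341
  have g1 : 4 / (σ - β) ≤ 3 / η + 13440 * L + 13 := by
    have : 4 / (σ - β) = 4 * (1 / (σ - β)) := by ring
    have h3 : 3 / η = 3 * (1 / η) := by ring
    rw [this, h3]; linarith
  have g2 : 13440 * L + 13 ≤ (1/2) / η := by
    have : (1/2) / η = 14000 * L := by rw [hη]; field_simp; norm_num
    linarith
  have g3 : 4 / (σ - β) ≤ (7/2) / η := by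
    have : (7/2) / η = 3 / η + (1/2)/η := by ring
    linarith
  rw [div_le_div_iff₀ (by linarith) hη0] at g3
  linarith

lemma zero_free_low : ∃ δ > (0:ℝ), δ ≤ 1 / 2 ∧ ∀ s : ℂ, |s.im| ≤ 1 → 1 - δ < s.re → Q s ≠ 0 := by
  set K : Set ℂ := ((Set.Icc (1/2:ℝ) 1) ×ℂ (Set.Icc (-1:ℝ) 1)) ∩ {s | Q s = 0} with hK
  have hKc : IsCompact K := by
    apply IsCompact.inter_right
    · exact IsCompact.reProdIm isCompact_Icc isCompact_Icc
    · exact isClosed_eq Q_diff.continuous continuous_const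
  rcases K.eq_empty_or_nonempty with he | hne
  · refine ⟨1/2, by norm_num, le_rfl, fun s hs1 hs2 h0 => ?_⟩
    by_cases h : 1 ≤ s.re
    · exact Q_ne_zero h h0
    · have : s ∈ K := ⟨⟨⟨by linarith, by linarith⟩, abs_le.mp hs1⟩, h0⟩
      rw [he] at this; exact this
  · obtain ⟨ρ, hρ, hmax⟩ := hKc.exists_isMaxOn hne Complex.continuous_re.continuousOn
    have h1 : ρ.re < 1 := by
      by_contra h; push Not at h; exact Q_ne_zero h hρ.2
    have h2 : 1/2 ≤ ρ.re := hρ.1.1.1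
    refine ⟨1 - ρ.re, by linarith, by linarith, fun s hs1 hs2 h0 => ?_⟩
    by_cases h : 1 ≤ s.re
    · exact Q_ne_zero h h0
    · have : s ∈ K := ⟨⟨⟨by linarith, by linarith⟩, abs_le.mp hs1⟩, h0⟩
      have := hmax this
      simp at this; linarith

lemma log_le_eventually (A : ℝ) : ∀ᶠ T : ℝ in atTop, A * Real.log T ≤ T := by
  have h := Real.isLittleO_log_id_atTop.bound (c := 1 / (|A| + 1)) (by positivity)
  filter_upwards [h, eventually_ge_atTop 1] with T hT h1
  have h2 := Real.log_nonneg h1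
  simp only [id, Real.norm_eq_abs, abs_of_nonneg h2, abs_of_nonneg (by linarith : 0 ≤ T)] at hT
  have h3 : 0 < |A| + 1 := by positivity
  rw [div_mul_eq_mul_div, one_mul, le_div_iff₀ h3] at hT
  nlinarith [le_abs_self A]

lemma zero_free : ∃ c > (0:ℝ), ∃ T₀ : ℝ, 10 ≤ T₀ ∧ ∀ T ≥ T₀, ∀ s : ℂ, |s.im| ≤ T →
    1 - c / Real.log T < s.re → Q s ≠ 0 := by
  obtain ⟨δ, hδ, hδ2, hlow⟩ := zero_free_low
  obtain ⟨T₁, hT₁⟩ := eventually_atTop.mp (log_le_eventually 28000)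
  refine ⟨min δ (1 / 196000), by positivity, max 10 T₁, le_max_left _ _, ?_⟩
  intro T hT s him hre h0
  have hT10 : 10 ≤ T := (le_max_left _ _).trans hT
  have hL1 : 1 ≤ Real.log T := by
    rw [Real.le_log_iff_exp_le (by linarith)]
    have := Real.exp_one_lt_d9; linarith
  by_cases h : |s.im| ≤ 1
  · refine hlow s h ?_ h0
    have : min δ (1 / 196000) / Real.log T ≤ δ := by
      rw [div_le_iff₀ (by linarith)]
      have := min_le_left δ (1 / 196000)
      nlinarith
    linarith
  · push Not at h
    have := zero_free_aux hT10 (hT₁ T ((le_max_right _ _).trans hT)) h.le him (β := s.re)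
      (by rw [Complex.re_add_im]; exact h0)
    have h3 : min δ (1 / 196000) / Real.log T ≤ 1 / (196000 * Real.log T) := by
      rw [← div_div]; gcongr; exact min_le_right _ _
    linarith
end VM

namespace VM
open Metric Filter Topology MeasureTheory

/-- the entire-quotient part of the logarithmic derivative of zeta -/
noncomputable def H (s : ℂ) : ℂ := deriv Q s / Q s

lemma H_analytic {s : ℂ} (hs : Q s ≠ 0) : AnalyticAt ℂ H s :=
  (Q_diff.analyticAt s).deriv.div (Q_diff.analyticAt s) hs

lemma Hn_analytic (n : ℕ) {s : ℂ} (hs : Q s ≠ 0) : AnalyticAt ℂ (iteratedDeriv n H) s := by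
  rw [iteratedDeriv_eq_iterate]
  exact (H_analytic hs).iterated_deriv n

lemma log_two_mul_le {T : ℝ} (hT : 10 ≤ T) : Real.log (2 * T) ≤ 2 * Real.log T := by
  rw [Real.log_mul (by norm_num) (by linarith)]
  have := Real.log_le_log (by norm_num) (by linarith : (2:ℝ) ≤ T)
  linarith

lemma one_le_log {T : ℝ} (hT : 10 ≤ T) : 1 ≤ Real.log T := by
  rw [Real.le_log_iff_exp_le (by linarith)]
  have := Real.exp_one_lt_d9; linarith

lemma H_bound : ∃ c > (0:ℝ), c ≤ 1 ∧ ∃ K > (0:ℝ), ∃ T₁ : ℝ, 10 ≤ T₁ ∧ ∀ T ≥ T₁, ∀ s : ℂ,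
    |s.im| ≤ T → |s.re - 1| ≤ c / Real.log T → Q s ≠ 0 ∧ ‖H s‖ ≤ K * Real.log T ^ 2 := by
  obtain ⟨c₀, hc₀, T₀, hT₀, hzf⟩ := zero_free
  set c₁ := min c₀ 1 with hc₁
  have hc₁0 : 0 < c₁ := by positivity
  have hc₁1 : c₁ ≤ 1 := min_le_right _ _
  have hc₁c : c₁ ≤ c₀ := min_le_left _ _
  obtain ⟨T₂, hT₂⟩ := eventually_atTop.mp (log_le_eventually (4 / c₁))
  refine ⟨c₁ / 8, by positivity, by linarith, 2240 / c₁, by positivity, max T₀ (max 10 T₂),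
    le_max_of_le_right (le_max_left _ _), ?_⟩
  intro T hT s him hre
  have hT10 : 10 ≤ T := (le_max_of_le_right (le_max_left _ _)).trans hT
  have hTT₀ : T₀ ≤ T := (le_max_left _ _).trans hT
  have hTT₂ : T₂ ≤ T := (le_max_of_le_right (le_max_right _ _)).trans hT
  have hL := one_le_log hT10
  have hL2 := one_le_log (T := 2 * T) (by linarith)
  have hLL := log_two_mul_le hT10
  have hbig := hT₂ (2 * T) (by linarith)
  set L := Real.log T
  set L' := Real.log (2 * T) with hL'
  set η := c₁ / (4 * L') with hη
  have hη0 : 0 < η := by positivity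
  have hη1 : η ≤ 1 / 4 := by
    rw [hη, div_le_iff₀ (by positivity)]; nlinarith
  have hηT : 1 / (2 * T) ≤ η := by
    rw [hη, div_le_div_iff₀ (by linarith) (by positivity)]
    rw [div_mul_eq_mul_div, div_le_iff₀ hc₁0] at hbig
    linarith
  have hcη : c₁ / 8 / L ≤ η := by
    rw [hη, div_div]; exact div_le_div_of_nonneg_left hc₁0.le (by positivity) (by linarith)
  set w : ℂ := ((1 + η : ℝ) : ℂ) + s.im * I with hw
  have hwre : w.re = 1 + η := by simp [hw]
  have hwim : w.im = s.im := by simp [hw]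
  have hball : ∀ z ∈ ball w (3 * η), 1 - 2 * η < z.re ∧ z.re ≤ 3 ∧ |z.im| ≤ 2 * T := by
    intro z hz
    rw [mem_ball_iff_norm] at hz
    have a1 := (Complex.abs_re_le_norm _).trans_lt hz
    have a2 := (Complex.abs_im_le_norm _).trans_lt hz
    rw [sub_re, hwre, abs_lt] at a1
    rw [sub_im, hwim, abs_lt] at a2
    rw [abs_le] at him ⊢
    refine ⟨by linarith, by linarith, by linarith, by linarith⟩
  have hne : ∀ z ∈ ball w (3 * η), Q z ≠ 0 := by
    intro z hz
    obtain ⟨h1, -, h3⟩ := hball z hz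
    refine hzf (2 * T) (by linarith) z h3 ?_
    have : 2 * η ≤ c₀ / L' := by
      rw [hη, le_div_iff₀ (by positivity)]; field_simp; linarith
    change 1 - c₀ / L' < _
    linarith
  have hsw : ‖s - w‖ ≤ 2 / 3 * (3 * η) := by
    have : s - w = ((s.re - 1 - η : ℝ) : ℂ) := by
      apply Complex.ext
      · simp [hw]; ring
      · simp [hw]
    rw [this, Complex.norm_real, Real.norm_eq_abs]
    rw [abs_le] at hre ⊢
    constructor <;> linarith
  refine ⟨hne s ?_, ?_⟩
  · rw [mem_ball_iff_norm]; linarith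
  · have := logDeriv_bound Q_diff (w := w) (R := 3 * η) (M := 7 * L') (by positivity) (by positivity)
      hne (fun z hz => by
        obtain ⟨h1, h2, h3⟩ := hball z hz
        exact Q_ratio (T := 2 * T) (by linarith) (by rw [hwre]; linarith) (by rw [hwre]; linarith)
          (by linarith) h2 (by linarith)) hsw
    refine this.trans ?_
    have e : 60 * (7 * L') / (3 * η) = 560 / c₁ * L' ^ 2 := by rw [hη]; field_simp; norm_num
    rw [e]
    calc 560 / c₁ * L' ^ 2 ≤ 560 / c₁ * (2 * L) ^ 2 := by gcongr
      _ = _ := by ring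

lemma Hn_bound (n : ℕ) : ∃ c > (0:ℝ), c ≤ 1 ∧ ∃ K > (0:ℝ), ∃ T₁ : ℝ, 10 ≤ T₁ ∧ ∀ T ≥ T₁, ∀ s : ℂ,
    |s.im| ≤ T → |s.re - 1| ≤ c / Real.log T → Q s ≠ 0 ∧ ‖iteratedDeriv n H s‖ ≤ K * Real.log T ^ (n + 2) := by
  obtain ⟨c, hc, hc1, K, hK, T₁, hT₁, hH⟩ := H_bound
  refine ⟨c / 8, by positivity, by linarith, n.factorial * (4 * K) * (8 / c) ^ n, by positivity, T₁, hT₁, ?_⟩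
  intro T hT s him hre
  have hL := one_le_log (hT₁.trans hT)
  have hL2 := one_le_log (T := 2 * T) (by linarith)
  have hLL := log_two_mul_le (hT₁.trans hT)
  have hr1 : c / 8 / Real.log T ≤ 1 / 8 := by
    rw [div_le_iff₀ (by positivity)]; nlinarith
  have hr2 : 2 * (c / 8 / Real.log T) ≤ c / Real.log (2 * T) := by
    rw [le_div_iff₀ (by positivity), div_div, ← mul_div_assoc, div_mul_eq_mul_div, div_le_iff₀ (by positivity)]
    nlinarith
  have hr0 : 0 < c / 8 / Real.log T := by positivity
  set r := c / 8 / Real.log T with hr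
  have hball : ∀ z ∈ closedBall s r, Q z ≠ 0 ∧ ‖H z‖ ≤ K * Real.log (2 * T) ^ 2 := by
    intro z hz
    rw [mem_closedBall_iff_norm] at hz
    have a1 := (Complex.abs_re_le_norm _).trans hz
    have a2 := (Complex.abs_im_le_norm _).trans hz
    rw [sub_re, abs_le] at a1
    rw [sub_im, abs_le] at a2
    rw [abs_le] at him hre
    refine hH (2 * T) (by linarith) z ?_ ?_
    · rw [abs_le]; constructor <;> linarith
    · rw [abs_le]; constructor <;> linarith
  refine ⟨(hball s (mem_closedBall_self hr0.le)).1, ?_⟩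
  have hd : DiffContOnCl ℂ H (ball s r) := by
    apply DifferentiableOn.diffContOnCl
    rw [closure_ball _ hr0.ne']
    intro z hz
    exact (H_analytic (hball z hz).1).differentiableAt.differentiableWithinAt
  have := Complex.norm_iteratedDeriv_le_of_forall_mem_sphere_norm_le n hr0 hd
    (fun z hz => (hball z (sphere_subset_closedBall hz)).2)
  refine this.trans ?_
  calc n.factorial * (K * Real.log (2 * T) ^ 2) / r ^ n
      ≤ n.factorial * (K * (2 * Real.log T) ^ 2) / r ^ n := by gcongr
    _ = _ := by
      rw [hr, div_pow, div_pow, div_pow]; field_simp; ring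
end VM

namespace VM
open Metric Filter Topology MeasureTheory

/-- iterated divided difference at 1 -/
noncomputable def ds : ℕ → (ℂ → ℂ) → ℂ → ℂ
  | 0, f => f
  | (k + 1), f => dslope (ds k f) 1

lemma fps_of_hasSum {f : ℂ → ℂ} {c : ℕ → ℂ} (hf : ContinuousAt f 1)
    (h : ∀ᶠ s in nhdsWithin (1 : ℂ) {(1 : ℂ)}ᶜ, HasSum (fun j : ℕ => c j * (s - 1) ^ j) (f s)) :
    HasFPowerSeriesAt f (FormalMultilinearSeries.ofScalars ℂ c) 1 := by
  set g := Function.update f 1 (c 0) with hg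
  have hgp : HasFPowerSeriesAt g (FormalMultilinearSeries.ofScalars ℂ c) 1 := by
    rw [hasFPowerSeriesAt_iff']
    rw [eventually_nhdsWithin_iff] at h
    filter_upwards [h] with z hz
    simp only [FormalMultilinearSeries.coeff_ofScalars, smul_eq_mul]
    by_cases h1 : z = 1
    · subst h1
      have : g 1 = c 0 := by simp [hg]
      rw [this]
      have h5 := hasSum_single (f := fun n => (1 - 1 : ℂ) ^ n * c n) 0 (by intro b hb; simp [hb])
      simpa using h5
    · have : g z = f z := by simp [hg, h1]
      rw [this]
      simpa [mul_comm] using hz h1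
  have hgc : ContinuousAt g 1 := hgp.continuousAt
  have : f 1 = c 0 := by
    rw [hg, continuousAt_update_same] at hgc
    exact tendsto_nhds_unique (hf.tendsto.mono_left nhdsWithin_le_nhds) hgc
  have hfg : g = f := by rw [hg, ← this, Function.update_eq_self]
  rwa [hfg] at hgp

lemma ds_coeff {f : ℂ → ℂ} {c : ℕ → ℂ}
    (h : HasFPowerSeriesAt f (FormalMultilinearSeries.ofScalars ℂ c) 1) (k : ℕ) : ds k f 1 = c k := by
  have key : ∀ k, HasFPowerSeriesAt (ds k f)
      (FormalMultilinearSeries.fslope^[k] (FormalMultilinearSeries.ofScalars ℂ c)) 1 := by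
    intro k
    induction k with
    | zero => exact h
    | succ k ih =>
      rw [Function.iterate_succ_apply']
      exact ih.has_fpower_series_dslope_fslope
  have h1 := (key k).coeff_zero 1
  have h2 := FormalMultilinearSeries.coeff_iterate_fslope (p := FormalMultilinearSeries.ofScalars ℂ c) k 0
  rw [zero_add, FormalMultilinearSeries.coeff_ofScalars] at h2
  rw [← h1, ← h2]
  rfl

lemma H_coeff {c : ℕ → ℂ} {f : ℂ → ℂ}
    (h : HasFPowerSeriesAt f (FormalMultilinearSeries.ofScalars ℂ c) 1) (n : ℕ) :
    iteratedDeriv n f 1 = n.factorial * c n := by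
  have h2 := h.analyticAt.hasFPowerSeriesAt
  have h3 := h.eq_formalMultilinearSeries h2
  have h4 := congrArg (fun p => FormalMultilinearSeries.coeff p n) h3
  simp only [FormalMultilinearSeries.coeff_ofScalars] at h4
  have : (n.factorial : ℂ) ≠ 0 := by exact_mod_cast n.factorial_ne_zero
  rw [h4]; field_simp

lemma ds_diff {f : ℂ → ℂ} {U : Set ℂ} (hU : U ∈ 𝓝 (1:ℂ)) (hf : DifferentiableOn ℂ f U) (k : ℕ) :
    DifferentiableOn ℂ (ds k f) U := by
  induction k with
  | zero => exact hf
  | succ k ih => exact (Complex.differentiableOn_dslope hU).mpr ih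

lemma ds_expand (f : ℂ → ℂ) (k : ℕ) (s : ℂ) :
    f s = ∑ j ∈ range k, ds j f 1 * (s - 1) ^ j + (s - 1) ^ k * ds k f s := by
  induction k with
  | zero => simp [ds]
  | succ k ih =>
    have h := sub_smul_dslope (ds k f) 1 s
    rw [smul_eq_mul] at h
    rw [ih, sum_range_succ, pow_succ, mul_assoc _ (s - 1), ds, h]
    ring

lemma dslope_mul_id {f : ℂ → ℂ} (hf : DifferentiableAt ℂ f 1) (a : ℂ) (s : ℂ) :
    dslope (fun s => a + s * f s) 1 s = f 1 + s * dslope f 1 s := by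
  by_cases hs : s = 1
  · subst hs
    rw [dslope_same, dslope_same]
    refine (((hasDerivAt_id (1:ℂ)).mul hf.hasDerivAt).const_add a).deriv.trans ?_
    simp
  · rw [dslope_of_ne _ hs, dslope_of_ne _ hs, slope_def_field, slope_def_field]
    have : s - 1 ≠ 0 := sub_ne_zero.mpr hs
    field_simp
    ring

/-- `ζ(s)/s - 1/(s-1)` -/
noncomputable def V (s : ℂ) : ℂ := (Z s - 1) / s

/-- right half plane -/
def RH : Set ℂ := {s | 0 < s.re}

lemma RH_open : IsOpen RH := isOpen_lt continuous_const Complex.continuous_re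

lemma RH_nhds : RH ∈ 𝓝 (1:ℂ) := RH_open.mem_nhds (by simp [RH])

lemma ne_zero_of_RH {s : ℂ} (hs : 0 < s.re) : s ≠ 0 := by rintro rfl; simp at hs

lemma V_diff : DifferentiableOn ℂ V RH := fun s hs =>
  (((Z_diff s).sub_const 1).div differentiableAt_id (ne_zero_of_RH hs)).differentiableWithinAt

lemma ds_Z (k : ℕ) : ∀ s ∈ RH, ds (k + 1) Z s = ds k V 1 + s * ds (k + 1) V s := by
  have hcongr : ∀ {f g : ℂ → ℂ}, (∀ s ∈ RH, f s = g s) → ∀ s ∈ RH, dslope f 1 s = dslope g 1 s := by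
    intro f g h s hs
    by_cases h1 : s = 1
    · subst h1
      rw [dslope_same, dslope_same]
      exact (Filter.eventuallyEq_of_mem RH_nhds h).deriv_eq
    · rw [dslope_of_ne _ h1, dslope_of_ne _ h1, slope_def_field, slope_def_field, h s hs,
        h 1 (by simp [RH])]
  induction k with
  | zero =>
    intro s hs
    have h0 : ∀ s ∈ RH, Z s = 1 + s * V s := by
      intro s hs
      have := ne_zero_of_RH hs
      rw [V]; field_simp; ring
    have := hcongr h0 s hs
    rw [dslope_mul_id (V_diff.differentiableAt RH_nhds)] at this
    exact this
  | succ k ih =>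
    intro s hs
    have := hcongr ih s hs
    rw [dslope_mul_id ((ds_diff RH_nhds V_diff (k+1)).differentiableAt RH_nhds)] at this
    exact this

lemma V_coeff {C : ℕ → ℂ} (hC : ∀ᶠ s in nhdsWithin (1 : ℂ) {(1 : ℂ)}ᶜ,
      HasSum (fun j : ℕ => C j * (s - 1) ^ j) (riemannZeta s - 1 / (s - 1))) (k : ℕ) :
    ds k V 1 = (-1) ^ k * (-1 + ∑ j ∈ range (k + 1), (-1 : ℂ) ^ j * C j) := by
  have h1 : HasFPowerSeriesAt Z (FormalMultilinearSeries.ofScalars ℂ C) 1 := by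
    refine fps_of_hasSum Z_diff.continuous.continuousAt ?_
    filter_upwards [hC, self_mem_nhdsWithin] with s hs hs1
    rwa [Z_of_ne hs1]
  have hZ := ds_coeff h1
  induction k with
  | zero =>
    have := hZ 0
    simp only [ds] at this
    simp [ds, V, this]; ring
  | succ k ih =>
    have h2 := ds_Z k 1 (by simp [RH])
    rw [hZ, ih] at h2
    rw [sum_range_succ]
    have h4 : ((-1:ℂ) ^ (k+1)) * (-1) ^ (k+1) = 1 := by rw [← mul_pow]; simp
    have h3 : ds (k+1) V 1 = C (k+1) - (-1) ^ k * (-1 + ∑ j ∈ range (k + 1), (-1 : ℂ) ^ j * C j) := by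
      rw [h2]; ring
    rw [h3]
    linear_combination (-C (k+1)) * h4

lemma Hn_one {A : ℕ → ℂ} (hA : ∀ᶠ s in nhdsWithin (1 : ℂ) {(1 : ℂ)}ᶜ,
      HasSum (fun j : ℕ => A j * (s - 1) ^ j)
        (deriv riemannZeta s / riemannZeta s + 1 / (s - 1))) (n : ℕ) :
    iteratedDeriv n H 1 = n.factorial * A n := by
  have hQ1 : Q 1 ≠ 0 := Q_ne_zero (by simp)
  refine H_coeff (fps_of_hasSum (H_analytic hQ1).continuousAt ?_) n
  have hne : ∀ᶠ s in nhdsWithin (1 : ℂ) {(1 : ℂ)}ᶜ, Q s ≠ 0 :=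
    (Q_diff.continuous.continuousAt.eventually_ne hQ1).filter_mono nhdsWithin_le_nhds
  filter_upwards [hA, self_mem_nhdsWithin, hne] with s hs hs1 hs2
  have hz : riemannZeta s ≠ 0 := by
    rw [Q_of_ne hs1] at hs2; exact right_ne_zero_of_mul hs2
  rwa [H, logDeriv_Q hs1 hz]

lemma bdd_dslope {f : ℂ → ℂ} (hf : DifferentiableOn ℂ f RH)
    (hb : ∃ B, ∀ s : ℂ, 1 / 2 ≤ s.re → ‖f s‖ ≤ B) :
    ∃ B, ∀ s : ℂ, 1 / 2 ≤ s.re → ‖dslope f 1 s‖ ≤ B := by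
  obtain ⟨B, hB⟩ := hb
  have hd := (Complex.differentiableOn_dslope RH_nhds).mpr hf
  have hsub : closedBall (1:ℂ) (1/4) ⊆ RH := by
    intro z hz
    rw [mem_closedBall_iff_norm] at hz
    have := (Complex.abs_re_le_norm _).trans hz
    rw [abs_le] at this
    simp at this
    simp only [RH, Set.mem_ofPred_eq]; linarith
  obtain ⟨B', hB'⟩ := (isCompact_closedBall (1:ℂ) (1/4)).exists_bound_of_continuousOn
    (hd.continuousOn.mono hsub)
  refine ⟨max B' (8 * B), fun s hs => ?_⟩
  by_cases h : ‖s - 1‖ ≤ 1/4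
  · exact (hB' s (mem_closedBall_iff_norm.mpr h)).trans (le_max_left _ _)
  · push Not at h
    have h1 : s ≠ 1 := by rintro rfl; simp at h; linarith
    refine le_trans ?_ (le_max_right _ _)
    rw [dslope_of_ne _ h1, slope_def_field, norm_div, div_le_iff₀ (by linarith)]
    have := (norm_sub_le (f s) (f 1)).trans (add_le_add (hB s hs) (hB 1 (by norm_num)))
    have hB0 := (norm_nonneg _).trans (hB s hs)
    nlinarith

lemma V_bdd (k : ℕ) : ∃ B, ∀ s : ℂ, 1 / 2 ≤ s.re → ‖ds k V s‖ ≤ B := by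
  induction k with
  | zero =>
    refine ⟨6, fun s hs => ?_⟩
    have h1 : 1 / 2 ≤ ‖s‖ := hs.trans (Complex.re_le_norm s)
    simp only [ds, V]
    rw [norm_div, div_le_iff₀ (by linarith)]
    have := norm_sub_le (Z s) 1
    have := Z_bound hs
    rw [norm_one] at *
    linarith
  | succ k ih => exact bdd_dslope (ds_diff RH_nhds V_diff k) ih

/-- The regular part -/
noncomputable def G (n : ℕ) (s : ℂ) : ℂ :=
  (-1) ^ (n + 1) * n.factorial * ds (n + 1) V s + V s * iteratedDeriv n H s
    + dslope (iteratedDeriv n H) 1 s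

lemma G_bound (n : ℕ) : ∃ c > (0:ℝ), c ≤ 1 / 2 ∧ ∃ K > (0:ℝ), ∃ T₁ : ℝ, 10 ≤ T₁ ∧ ∀ T ≥ T₁, ∀ s : ℂ,
    |s.im| ≤ T → |s.re - 1| ≤ c / Real.log T → DifferentiableAt ℂ (G n) s ∧
      ‖G n s‖ ≤ K * Real.log T ^ (n + 2) := by
  obtain ⟨c, hc, hc1, K, hK, T₁, hT₁, hH⟩ := Hn_bound n
  obtain ⟨B0, hB0⟩ := V_bdd 0
  obtain ⟨B1, hB1⟩ := V_bdd (n + 1)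
  have hQ1 : Q 1 ≠ 0 := Q_ne_zero (by simp)
  obtain ⟨ρ, hρ, hρQ⟩ := Metric.eventually_nhds_iff_ball.mp
    (Q_diff.continuous.continuousAt.eventually_ne hQ1)
  set U : Set ℂ := {s | Q s ≠ 0} with hU
  have hUo : IsOpen U := isOpen_ne_fun Q_diff.continuous continuous_const
  have hHd : DifferentiableOn ℂ (iteratedDeriv n H) U := fun s hs =>
    (Hn_analytic n hs).differentiableAt.differentiableWithinAt
  have hDd : DifferentiableOn ℂ (dslope (iteratedDeriv n H) 1) U :=
    (Complex.differentiableOn_dslope (hUo.mem_nhds hQ1)).mpr hHd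
  obtain ⟨B2, hB2⟩ := (isCompact_closedBall (1:ℂ) (ρ/2)).exists_bound_of_continuousOn
    (hDd.continuousOn.mono (fun z hz => hρQ z (closedBall_subset_ball (by linarith) hz)))
  have hB0' : 0 ≤ B0 := (norm_nonneg _).trans (hB0 1 (by norm_num))
  have hB1' : 0 ≤ B1 := (norm_nonneg _).trans (hB1 1 (by norm_num))
  have hB2' : 0 ≤ B2 := (norm_nonneg _).trans (hB2 1 (mem_closedBall_self (by linarith)))
  refine ⟨c / 2, by linarith, by linarith, n.factorial * B1 + B0 * K + (B2 + 4 * K / ρ), by positivity,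
    T₁, hT₁, ?_⟩
  intro T hT s him hre
  have hL := one_le_log (hT₁.trans hT)
  have hre2 : |s.re - 1| ≤ c / Real.log T := hre.trans (by gcongr; linarith)
  obtain ⟨hQs, hHs⟩ := hH T hT s him hre2
  have hs12 : 1 / 2 ≤ s.re := by
    have : c / 2 / Real.log T ≤ 1 / 2 := by
      rw [div_le_iff₀ (by linarith)]; nlinarith
    rw [abs_le] at hre; linarith
  have hsRH : s ∈ RH := by simp only [RH, Set.mem_ofPred_eq]; linarith
  refine ⟨?_, ?_⟩
  · have e1 := (ds_diff RH_nhds V_diff (n+1)).differentiableAt (RH_open.mem_nhds hsRH)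
    have e2 := V_diff.differentiableAt (RH_open.mem_nhds hsRH)
    have e3 := hHd.differentiableAt (hUo.mem_nhds hQs)
    have e4 := hDd.differentiableAt (hUo.mem_nhds hQs)
    exact ((e1.const_mul _).add (e2.mul e3)).add e4
  · have hLp : 1 ≤ Real.log T ^ (n + 2) := one_le_pow₀ hL
    have f1 : ‖(-1 : ℂ) ^ (n + 1) * n.factorial * ds (n + 1) V s‖ ≤ n.factorial * B1 * Real.log T ^ (n + 2) := by
      rw [norm_mul, norm_mul, norm_pow, norm_neg, norm_one, one_pow, one_mul, Complex.norm_natCast]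
      have := hB1 s hs12
      calc _ ≤ n.factorial * B1 * 1 := by rw [mul_one]; gcongr
        _ ≤ _ := by gcongr
    have f2 : ‖V s * iteratedDeriv n H s‖ ≤ B0 * K * Real.log T ^ (n + 2) := by
      rw [norm_mul, mul_assoc]
      exact mul_le_mul (hB0 s hs12) hHs (norm_nonneg _) hB0'
    have f3 : ‖dslope (iteratedDeriv n H) 1 s‖ ≤ (B2 + 4 * K / ρ) * Real.log T ^ (n + 2) := by
      by_cases h : ‖s - 1‖ ≤ ρ / 2
      · calc _ ≤ B2 := hB2 s (mem_closedBall_iff_norm.mpr h)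
          _ ≤ (B2 + 4 * K / ρ) * 1 := by rw [mul_one]; linarith [(by positivity : 0 ≤ 4 * K / ρ)]
          _ ≤ _ := by gcongr
      · push Not at h
        have h1 : s ≠ 1 := by rintro rfl; simp at h; linarith
        have hH1 := (hH T hT 1 (by simp; linarith) (by simp; positivity)).2
        rw [dslope_of_ne _ h1, slope_def_field, norm_div]
        calc _ ≤ (2 * (K * Real.log T ^ (n + 2))) / (ρ / 2) := by
              gcongr
              exact (norm_sub_le _ _).trans (by linarith)
          _ = 4 * K / ρ * Real.log T ^ (n + 2) := by field_simp; ring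
          _ ≤ _ := by gcongr; linarith
    calc ‖G n s‖ ≤ _ := norm_add₃_le
      _ ≤ _ := by rw [add_mul, add_mul]; gcongr
end VM

namespace VM
open Metric Filter Topology MeasureTheory

lemma logpow_le (m : ℕ) {ε u : ℝ} (hε : 0 < ε) (hu : 1 ≤ u) :
    (1 + Real.log u) ^ m ≤ (1 + (m + 1) / ε) ^ m * u ^ ε := by
  set δ := ε / (m + 1) with hδ
  have hδ0 : 0 < δ := by positivity
  have h1 : Real.log u ≤ u ^ δ / δ := Real.log_le_rpow_div (by linarith) hδ0
  have h2 : 1 ≤ u ^ δ := Real.one_le_rpow hu hδ0.le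
  have h3 : 1 + Real.log u ≤ (1 + (m + 1) / ε) * u ^ δ := by
    have : (m + 1) / ε = 1 / δ := by rw [hδ]; field_simp
    rw [this]
    calc _ ≤ u ^ δ + u ^ δ / δ := add_le_add h2 h1
      _ = _ := by ring
  have h0 := Real.log_nonneg hu
  calc (1 + Real.log u) ^ m ≤ ((1 + (m + 1) / ε) * u ^ δ) ^ m := by gcongr
    _ = (1 + (m + 1) / ε) ^ m * (u ^ δ) ^ m := mul_pow _ _ _
    _ ≤ _ := by
      gcongr
      rw [← Real.rpow_natCast, ← Real.rpow_mul (by linarith)]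
      apply Real.rpow_le_rpow_of_exponent_le hu
      rw [hδ, div_mul_eq_mul_div, div_le_iff₀ (by positivity)]
      nlinarith

/-- Dirichlet coefficients. -/
noncomputable def acoef (n N : ℕ) : ℝ :=
  ∑ p ∈ N.divisorsAntidiagonal, ArithmeticFunction.vonMangoldt p.2 * Real.log p.2 ^ n

lemma acoef_nonneg (n N : ℕ) : 0 ≤ acoef n N := by
  refine sum_nonneg fun p _ => mul_nonneg ArithmeticFunction.vonMangoldt_nonneg ?_
  exact pow_nonneg (Real.log_natCast_nonneg _) _

lemma acoef_le (n N : ℕ) : acoef n N ≤ Real.log N ^ (n + 1) := by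
  rw [acoef, pow_succ']
  rcases Nat.eq_zero_or_pos N with rfl | hN
  · simp
  calc _ ≤ ∑ p ∈ N.divisorsAntidiagonal, ArithmeticFunction.vonMangoldt p.2 * Real.log N ^ n := by
        refine sum_le_sum fun p hp => ?_
        rw [Nat.mem_divisorsAntidiagonal] at hp
        have h2 : p.2 ≤ N := Nat.le_of_dvd hN (Dvd.intro_left _ hp.1)
        have h3 : 0 < p.2 := Nat.pos_of_ne_zero (by rintro h; rw [h] at hp; simp at hp; omega)
        have := ArithmeticFunction.vonMangoldt_nonneg (n := p.2)
        have := Real.log_natCast_nonneg p.2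
        have : Real.log p.2 ≤ Real.log N := Real.log_le_log (by exact_mod_cast h3) (by exact_mod_cast h2)
        gcongr
    _ = _ := by
      rw [← sum_mul, ← ArithmeticFunction.vonMangoldt_sum, Nat.sum_divisorsAntidiagonal' (f := fun _ b => ArithmeticFunction.vonMangoldt b)]

lemma pairSum_eq (n : ℕ) (Y : ℝ) :
    vonMangoldtPairSum n Y = ∑ N ∈ Icc 1 ⌊Y⌋₊, acoef n N := by
  rw [vonMangoldtPairSum]
  have hle : ∀ p : ℕ × ℕ, 1 ≤ p.1 → 1 ≤ p.2 → (((p.1 : ℝ) * (p.2 : ℝ) ≤ Y) ↔ p.1 * p.2 ≤ ⌊Y⌋₊) := by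
    intro p h1 h2
    rw [Nat.le_floor_iff' (by positivity)]
    push_cast; rfl
  rw [← sum_fiberwise_of_maps_to (s := (Icc 1 ⌊Y⌋₊ ×ˢ Icc 1 ⌊Y⌋₊).filter
      (fun p : ℕ × ℕ => ((p.1 : ℝ) * (p.2 : ℝ) ≤ Y))) (t := Icc 1 ⌊Y⌋₊) (g := fun p => p.1 * p.2)]
  · refine sum_congr rfl fun N hN => ?_
    rw [acoef]
    refine sum_congr ?_ fun _ _ => rfl
    rw [mem_Icc] at hN
    ext p
    simp only [mem_filter, mem_product, mem_Icc, Nat.mem_divisorsAntidiagonal]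
    constructor
    · rintro ⟨_, h⟩
      exact ⟨h, by omega⟩
    · rintro ⟨h, h0⟩
      have h1 : 1 ≤ p.1 := Nat.pos_of_ne_zero (by rintro h'; rw [h'] at h; simp at h; omega)
      have h2 : 1 ≤ p.2 := Nat.pos_of_ne_zero (by rintro h'; rw [h'] at h; simp at h; omega)
      refine ⟨⟨⟨⟨h1, ?_⟩, h2, ?_⟩, ?_⟩, h⟩
      · nlinarith
      · nlinarith
      · rw [hle p h1 h2]; omega
  · intro p hp
    simp only [mem_filter, mem_product, mem_Icc] at hp
    rw [hle p hp.1.1.1 hp.1.2.1] at hp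
    rw [mem_Icc]
    exact ⟨Nat.mul_pos hp.1.1.1 hp.1.2.1, hp.2⟩

lemma sum_acoef_le (n N : ℕ) : ∑ k ∈ Icc 1 N, acoef n k ≤ N * Real.log N ^ (n + 1) := by
  calc _ ≤ ∑ k ∈ Icc 1 N, Real.log N ^ (n + 1) := by
        refine sum_le_sum fun k hk => (acoef_le n k).trans ?_
        rw [mem_Icc] at hk
        have := Real.log_natCast_nonneg k
        have : Real.log k ≤ Real.log N := Real.log_le_log (by exact_mod_cast hk.1) (by exact_mod_cast hk.2)
        gcongr
    _ = _ := by simp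

lemma pairSum_nonneg (n : ℕ) (Y : ℝ) : 0 ≤ vonMangoldtPairSum n Y := by
  rw [pairSum_eq]; exact sum_nonneg fun _ _ => acoef_nonneg _ _

lemma pairSum_mono (n : ℕ) : Monotone (vonMangoldtPairSum n) := by
  intro x y h
  rw [pairSum_eq, pairSum_eq]
  exact sum_le_sum_of_subset_of_nonneg (Icc_subset_Icc_right (Nat.floor_le_floor h))
    (fun _ _ _ => acoef_nonneg _ _)

lemma pairSum_le (n : ℕ) {Y : ℝ} (hY : 1 ≤ Y) :
    vonMangoldtPairSum n Y ≤ Y * (1 + Real.log Y) ^ (n + 1) := by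
  rw [pairSum_eq]
  refine (sum_acoef_le n _).trans ?_
  have h1 : (⌊Y⌋₊ : ℝ) ≤ Y := Nat.floor_le (by linarith)
  have h2 : 1 ≤ ⌊Y⌋₊ := Nat.le_floor (by simpa using hY)
  have h3 : Real.log ⌊Y⌋₊ ≤ Real.log Y := Real.log_le_log (by exact_mod_cast h2) h1
  have := Real.log_natCast_nonneg ⌊Y⌋₊
  gcongr
  linarith

lemma acoef_integral (n : ℕ) {s : ℂ} (hs : 1 < s.re) :
    LSeries (fun N => (acoef n N : ℂ)) s =
      s * ∫ t in Set.Ioi (1 : ℝ), (vonMangoldtPairSum n t : ℂ) * (t : ℂ) ^ (-(s + 1)) := by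
  obtain ⟨r, hr1, hr⟩ := exists_between hs
  rw [LSeries_eq_mul_integral_of_nonneg (acoef n) (r := r) (by linarith) hr ?_ (acoef_nonneg n)]
  · simp only [pairSum_eq, Complex.ofReal_sum]
  · refine Asymptotics.IsBigO.of_bound ((1 + ((n + 1 : ℕ) + 1) / (r - 1)) ^ (n + 1)) ?_
    filter_upwards [eventually_ge_atTop 1] with N hN
    have hN1 : (1:ℝ) ≤ N := by exact_mod_cast hN
    rw [Real.norm_of_nonneg (sum_nonneg fun _ _ => acoef_nonneg _ _), Real.norm_of_nonneg (by positivity)]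
    refine (sum_acoef_le n N).trans ?_
    have h1 := logpow_le (n + 1) (ε := r - 1) (by linarith) hN1
    have h0 := Real.log_nonneg hN1
    have h2 : Real.log N ^ (n + 1) ≤ (1 + Real.log N) ^ (n + 1) := by gcongr; linarith
    calc _ ≤ N * ((1 + ((n + 1 : ℕ) + 1) / (r - 1)) ^ (n + 1) * (N:ℝ) ^ (r - 1)) := by
          gcongr; exact h2.trans h1
      _ = _ := by
        rw [Real.rpow_sub (by linarith), Real.rpow_one]; field_simp

lemma logMul_iter (f : ℕ → ℂ) (n N : ℕ) : LSeries.logMul^[n] f N = Complex.log N ^ n * f N := by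
  induction n with
  | zero => simp
  | succ n ih =>
    rw [Function.iterate_succ_apply', LSeries.logMul, ih]; ring

lemma acoef_LSeries (n : ℕ) {s : ℂ} (hs : 1 < s.re) :
    (-1) ^ (n + 1) * LSeries (fun N => (acoef n N : ℂ)) s =
      riemannZeta s * ((-1) ^ (n + 1) * n.factorial / (s - 1) ^ (n + 1) + iteratedDeriv n H s) := by
  set f : ℕ → ℂ := fun n => (ArithmeticFunction.vonMangoldt n : ℂ) with hf
  have habs : LSeries.abscissaOfAbsConv f ≤ 1 :=
    LSeries.abscissaOfAbsConv_le_of_forall_lt_LSeriesSummable' (fun y hy =>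
      ArithmeticFunction.LSeriesSummable_vonMangoldt (by simpa using (by exact_mod_cast hy : (1:ℝ) < y)))
  have habs' : LSeries.abscissaOfAbsConv f < s.re := habs.trans_lt (by exact_mod_cast hs)
  set g := LSeries.logMul^[n] f with hg
  have hgs : LSeriesSummable g s := by
    apply LSeriesSummable_of_abscissaOfAbsConv_lt_re
    rw [hg, LSeries.absicssaOfAbsConv_logPowMul]; exact habs'
  have e1 : (fun N => (acoef n N : ℂ)) = LSeries.convolution 1 g := by
    funext N
    rw [LSeries.convolution_def, acoef, Complex.ofReal_sum]
    refine sum_congr rfl fun p _ => ?_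
    rw [hg, logMul_iter, hf]
    simp only [Pi.one_apply, one_mul]
    push_cast
    ring
  rw [e1, LSeries_convolution' (LSeriesSummable_one_iff.mpr hs) hgs, LSeries_one_eq_riemannZeta hs]
  have e2 := LSeries_iteratedDeriv (f := f) n habs'
  have hopen : IsOpen {z : ℂ | 1 < z.re} := isOpen_lt continuous_const Complex.continuous_re
  have e3 : LSeries f =ᶠ[𝓝 s] fun z => (z - 1)⁻¹ - H z := by
    filter_upwards [hopen.mem_nhds hs] with z hz
    rw [hf, ArithmeticFunction.LSeries_vonMangoldt_eq_deriv_riemannZeta_div hz, H,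
      logDeriv_Q (by rintro rfl; simp at hz) (riemannZeta_ne_zero_of_one_le_re (le_of_lt hz))]
    ring
  have hs1 : s - 1 ≠ 0 := by intro h; rw [sub_eq_zero] at h; rw [h] at hs; simp at hs
  have hH : AnalyticAt ℂ H s := H_analytic (Q_ne_zero hs.le)
  have hI : AnalyticAt ℂ (fun z : ℂ => (z - 1)⁻¹) s := (analyticAt_id.sub analyticAt_const).inv hs1
  have e4 : iteratedDeriv n (LSeries f) s = (-1) ^ n * n.factorial / (s - 1) ^ (n + 1) - iteratedDeriv n H s := by
    rw [e3.iteratedDeriv_eq, iteratedDeriv_fun_sub hI.contDiffAt hH.contDiffAt]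
    congr 1
    have := congrFun (iter_deriv_inv_linear_sub (𝕜 := ℂ) n 1 1) s
    simp only [one_mul, one_pow, mul_one] at this
    rw [iteratedDeriv_eq_iterate, this, div_eq_mul_inv]
    congr 1
    rw [show (-1 - (n:ℤ)) = -((n+1 : ℕ) : ℤ) by push_cast; ring, zpow_neg, zpow_natCast]
  rw [e4] at e2
  have h5 : ((-1:ℂ) ^ n) * (-1) ^ n = 1 := by rw [← mul_pow]; simp
  have e5 : LSeries g s = (-1) ^ n * ((-1) ^ n * n.factorial / (s - 1) ^ (n + 1) - iteratedDeriv n H s) := by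
    rw [e2, ← mul_assoc, h5, one_mul]
  rw [e5]
  rw [pow_succ]
  linear_combination (- riemannZeta s * ( (-1) ^ n * n.factorial / (s - 1) ^ (n + 1) - iteratedDeriv n H s)) * h5
end VM

namespace VM
open Metric Filter Topology MeasureTheory

lemma kernel_bound {E : ℝ → ℂ} {K : ℝ} {m : ℕ} 
    (hb : ∀ u : ℝ, 1 ≤ u → ‖E u‖ ≤ K * (u * (1 + Real.log u) ^ m)) {s : ℂ} (hs : 1 < s.re)
    {u : ℝ} (hu : 1 ≤ u) : ‖E u * (u : ℂ) ^ (-(s + 1))‖ ≤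
      K * (1 + (m + 1) / ((s.re - 1) / 2)) ^ m * u ^ (-1 - (s.re - 1) / 2) := by
  have hu0 : 0 < u := by linarith
  have hlog := Real.log_nonneg hu
  have hK : 0 ≤ K := by
    have := (norm_nonneg _).trans (hb 1 le_rfl)
    simpa using this
  have h1 := logpow_le m (ε := (s.re - 1) / 2) (by linarith) hu
  rw [norm_mul, Complex.norm_cpow_eq_rpow_re_of_pos hu0]
  simp only [neg_re, add_re, one_re]
  calc _ ≤ K * (u * ((1 + (m + 1) / ((s.re - 1) / 2)) ^ m * u ^ ((s.re - 1) / 2))) * u ^ (-(s.re + 1)) := by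
        gcongr
        exact (hb u hu).trans (by gcongr)
    _ = K * (1 + (m + 1) / ((s.re - 1) / 2)) ^ m * (u ^ (1:ℝ) * u ^ ((s.re - 1) / 2) * u ^ (-(s.re + 1))) := by
        rw [Real.rpow_one]; ring
    _ = _ := by
        rw [← Real.rpow_add hu0, ← Real.rpow_add hu0]
        congr 2; ring

lemma kernel_integrable {E : ℝ → ℂ} {K : ℝ} {m : ℕ} (hE : Measurable E)
    (hb : ∀ u : ℝ, 1 ≤ u → ‖E u‖ ≤ K * (u * (1 + Real.log u) ^ m)) {s : ℂ} (hs : 1 < s.re) :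
    IntegrableOn (fun u : ℝ => E u * (u : ℂ) ^ (-(s + 1))) (Set.Ioi 1) := by
  have hi : IntegrableOn (fun u : ℝ => K * (1 + (m + 1) / ((s.re - 1) / 2)) ^ m * u ^ (-1 - (s.re - 1) / 2))
      (Set.Ioi 1) := (integrableOn_Ioi_rpow_of_lt (by linarith) one_pos).const_mul _
  refine Integrable.mono' hi ?_ ?_
  · refine Measurable.aestronglyMeasurable ?_
    have : Measurable (fun u : ℝ => (u : ℂ) ^ (-(s + 1))) := by fun_prop
    exact hE.mul this
  · refine (ae_restrict_iff' measurableSet_Ioi).mpr (ae_of_all _ fun u hu => ?_)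
    exact kernel_bound hb hs (le_of_lt hu)

lemma kernel_norm {E : ℝ → ℂ} {K : ℝ} {m : ℕ}
    (hb : ∀ u : ℝ, 1 ≤ u → ‖E u‖ ≤ K * (u * (1 + Real.log u) ^ m)) {s : ℂ} (hs : 1 < s.re) (hs2 : s.re ≤ 2) :
    ‖∫ u in Set.Ioi (1:ℝ), E u * (u : ℂ) ^ (-(s + 1))‖ ≤
      2 * K * (2 * m + 3) ^ m * (1 / (s.re - 1)) ^ (m + 1) := by
  have hK : 0 ≤ K := by
    have := (norm_nonneg _).trans (hb 1 le_rfl)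
    simpa using this
  have hi : IntegrableOn (fun u : ℝ => K * (1 + (m + 1) / ((s.re - 1) / 2)) ^ m * u ^ (-1 - (s.re - 1) / 2))
      (Set.Ioi 1) := (integrableOn_Ioi_rpow_of_lt (by linarith) one_pos).const_mul _
  refine (norm_integral_le_of_norm_le hi ((ae_restrict_iff' measurableSet_Ioi).mpr
    (ae_of_all _ fun u hu => kernel_bound hb hs (le_of_lt hu)))).trans ?_
  rw [integral_const_mul, integral_Ioi_rpow_of_lt (by linarith) one_pos, Real.one_rpow]
  set η := s.re - 1 with hη
  have hη0 : 0 < η := by linarith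
  have hη1 : η ≤ 1 := by linarith
  have e1 : -1 / (-1 - η / 2 + 1) = 2 * (1 / η) := by
    rw [show -1 - η / 2 + 1 = -(η / 2) by ring]; field_simp
  have e2 : 1 + (m + 1) / (η / 2) ≤ (2 * m + 3) * (1 / η) := by
    have : 1 ≤ 1 / η := by rw [le_div_iff₀ hη0]; linarith
    have e : ((m:ℝ) + 1) / (η / 2) = (2 * m + 2) * (1 / η) := by field_simp
    rw [e]; linarith
  rw [e1]
  calc _ ≤ K * ((2 * m + 3) * (1 / η)) ^ m * (2 * (1 / η)) := by gcongr
    _ = _ := by rw [mul_pow, pow_succ]; ring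

lemma log_kernel_bound (k : ℕ) : ∀ u : ℝ, 1 ≤ u → ‖((u * Real.log u ^ k : ℝ) : ℂ)‖ ≤ 1 * (u * (1 + Real.log u) ^ k) := by
  intro u hu
  have := Real.log_nonneg hu
  rw [Complex.norm_real, Real.norm_of_nonneg (by positivity), one_mul]
  gcongr; linarith

lemma log_integral (k : ℕ) {s : ℂ} (hs : 1 < s.re) :
    ∫ u in Set.Ioi (1:ℝ), ((u * Real.log u ^ k : ℝ) : ℂ) * (u : ℂ) ^ (-(s + 1)) = k.factorial / (s - 1) ^ (k + 1) := by
  have hs1 : s - 1 ≠ 0 := by intro h; rw [sub_eq_zero] at h; rw [h] at hs; simp at hs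
  have hpow : ∀ u : ℝ, 0 < u → (u : ℂ) * (u:ℂ) ^ (-(s + 1)) = (u:ℂ) ^ (-s) := by
    intro u hu
    have hu' : (u:ℂ) ≠ 0 := by exact_mod_cast hu.ne'
    rw [show -(s + 1) = -s - 1 by ring, Complex.cpow_sub _ _ hu', Complex.cpow_one]
    field_simp
  have hpow2 : ∀ u : ℝ, 0 < u → (u : ℂ)⁻¹ * (u:ℂ) ^ (1 - s) = (u:ℂ) ^ (-s) := by
    intro u hu
    have hu' : (u:ℂ) ≠ 0 := by exact_mod_cast hu.ne'
    rw [sub_eq_add_neg, Complex.cpow_add _ _ hu', Complex.cpow_one, ← mul_assoc, inv_mul_cancel₀ hu', one_mul]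
  have hIntg : ∀ k : ℕ, IntegrableOn (fun u : ℝ => ((u * Real.log u ^ k : ℝ) : ℂ) * (u : ℂ) ^ (-(s + 1))) (Set.Ioi 1) := by
    intro k
    exact kernel_integrable (by fun_prop) (log_kernel_bound k) hs
  induction k with
  | zero =>
    have : ∫ u in Set.Ioi (1:ℝ), ((u * Real.log u ^ 0 : ℝ) : ℂ) * (u : ℂ) ^ (-(s + 1)) = ∫ u in Set.Ioi (1:ℝ), (u : ℂ) ^ (-s) := by
      refine setIntegral_congr_fun measurableSet_Ioi fun u hu => ?_
      have hu0 : 0 < u := lt_trans one_pos hu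
      simp only [pow_zero, mul_one]
      exact hpow u hu0
    rw [this, integral_Ioi_cpow_of_lt (by simpa using hs) one_pos]
    simp
    rw [show -s + 1 = -(s - 1) by ring, neg_div_neg_eq, one_div]
  | succ k ih =>
    have hderiv : ∀ u ∈ Set.Ioi (1:ℝ), HasDerivAt (fun u : ℝ => (Real.log u : ℂ) ^ (k+1) * (u:ℂ) ^ (1 - s) / (1 - s))
        (((u * Real.log u ^ (k+1) : ℝ) : ℂ) * (u : ℂ) ^ (-(s + 1)) - ((k+1 : ℕ) : ℂ) / (s - 1) * (((u * Real.log u ^ k : ℝ) : ℂ) * (u : ℂ) ^ (-(s + 1)))) u := by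
      intro u hu
      have hu0 : 0 < u := lt_trans one_pos hu
      have hu' : (u:ℂ) ≠ 0 := by exact_mod_cast hu0.ne'
      have hs1' : 1 - s ≠ 0 := by rw [← neg_sub]; exact neg_ne_zero.mpr hs1
      have d1 : HasDerivAt (fun u : ℝ => (Real.log u : ℂ)) ((u⁻¹ : ℝ) : ℂ) u := (Real.hasDerivAt_log hu0.ne').ofReal_comp
      have d2 : HasDerivAt (fun u : ℝ => (u:ℂ) ^ (1 - s)) ((1 - s) * (u:ℂ) ^ (1 - s - 1)) u := by
        have := ((hasDerivAt_id (u:ℂ)).cpow_const (c := 1 - s) (Or.inl (by simpa using hu0))).comp_ofReal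
        simpa using this
      refine (((d1.pow (k+1)).mul d2).div_const (1 - s)).congr_deriv ?_
      push_cast
      have e : ∀ a : ℂ, (u:ℂ) * a * (u:ℂ) ^ (-(s + 1)) = a * (u:ℂ) ^ (-s) := by
        intro a; rw [← hpow u hu0]; ring
      rw [e, e, show 1 - s - 1 = -s by ring, ← hpow2 u hu0]
      simp only [Nat.add_sub_cancel, Pi.pow_apply]
      have : s - 1 = -(1 - s) := by ring
      rw [this]
      field_simp
      ring
    have hlim : Tendsto (fun u : ℝ => (Real.log u : ℂ) ^ (k+1) * (u:ℂ) ^ (1 - s) / (1 - s)) atTop (𝓝 0) := by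
      rw [← zero_div (1 - s)]
      refine Tendsto.div_const ?_ _
      have hlim2 : Tendsto (fun u : ℝ => (1 + ((k + 1 : ℕ) + 1) / ((s.re - 1) / 2)) ^ (k + 1) * u ^ (-((s.re - 1) / 2))) atTop (𝓝 0) := by
        have := (tendsto_rpow_neg_atTop (y := (s.re - 1) / 2) (by linarith)).const_mul ((1 + (((k + 1 : ℕ) : ℝ) + 1) / ((s.re - 1) / 2)) ^ (k + 1))
        rwa [mul_zero] at this
      refine squeeze_zero_norm' ?_ hlim2
      filter_upwards [eventually_ge_atTop 1] with u hu
      have hu0 : 0 < u := by linarith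
      have hl := Real.log_nonneg hu
      have h1 := logpow_le (k + 1) (ε := (s.re - 1) / 2) (by linarith) hu
      rw [norm_mul, norm_pow, Complex.norm_real, Real.norm_of_nonneg hl, Complex.norm_cpow_eq_rpow_re_of_pos hu0]
      have h2 : Real.log u ^ (k + 1) ≤ (1 + Real.log u) ^ (k + 1) := by gcongr; linarith
      calc _ ≤ (1 + ((k + 1 : ℕ) + 1) / ((s.re - 1) / 2)) ^ (k + 1) * u ^ ((s.re - 1) / 2) * u ^ (1 - s).re := by
            gcongr; exact h2.trans h1
        _ = _ := by
            rw [mul_assoc, ← Real.rpow_add hu0]; congr 2; simp; ring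
    have hmain := integral_Ioi_of_hasDerivAt_of_tendsto (a := (1:ℝ)) (f := fun u : ℝ => (Real.log u : ℂ) ^ (k+1) * (u:ℂ) ^ (1 - s) / (1 - s)) (by
        have d1 : ContinuousAt (fun u : ℝ => (Real.log u : ℂ)) 1 := (Real.hasDerivAt_log one_ne_zero).ofReal_comp.continuousAt
        have d2 : ContinuousAt (fun u : ℝ => (u:ℂ) ^ (1 - s)) 1 :=
          ((hasDerivAt_id (((1:ℝ):ℂ))).cpow_const (c := 1 - s) (Or.inl (by simp))).comp_ofReal.continuousAt
        exact (((d1.pow (k+1)).mul d2).div_const _).continuousWithinAt) hderiv ((hIntg (k+1)).sub ((hIntg k).const_mul _)) hlim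
    rw [integral_sub (hIntg (k+1)) ((hIntg k).const_mul _), integral_const_mul, ih] at hmain
    simp only [Real.log_one, Complex.ofReal_zero, ne_eq, Nat.add_eq_zero_iff, one_ne_zero, and_false, not_false_eq_true, zero_pow, zero_mul, zero_div, sub_zero, sub_self] at hmain
    rw [sub_eq_zero] at hmain
    rw [hmain, Nat.factorial_succ]
    push_cast
    rw [pow_succ (s - 1) (k + 1)]
    field_simp
end VM

namespace VM
open Metric Filter Topology MeasureTheory

/-- the terms `u log^k u`, as complex numbers -/
noncomputable def tl (k : ℕ) (u : ℝ) : ℂ := ((u * Real.log u ^ k : ℝ) : ℂ)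

/-- Lipschitz-type property up to logarithms -/
def LogLip (m : ℕ) (f : ℝ → ℂ) : Prop :=
  ∃ K : ℝ, 0 ≤ K ∧ ∀ u w : ℝ, 1 ≤ u → u ≤ w → ‖f w - f u‖ ≤ K * ((w - u) * (1 + Real.log w) ^ m)

lemma tl_lip (k : ℕ) : ∀ u w : ℝ, 1 ≤ u → u ≤ w →
    |w * Real.log w ^ k - u * Real.log u ^ k| ≤ (k + 1) * ((w - u) * (1 + Real.log w) ^ k) := by
  intro u w hu huw
  have hu0 : 0 < u := by linarith
  have hw0 : 0 < w := by linarith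
  have l1 := Real.log_nonneg hu
  have l2 : Real.log u ≤ Real.log w := Real.log_le_log hu0 huw
  have l3 : 0 ≤ Real.log w := l1.trans l2
  have l4 : u * (Real.log w - Real.log u) ≤ w - u := by
    have := Real.log_le_sub_one_of_pos (div_pos hw0 hu0)
    rw [Real.log_div hw0.ne' hu0.ne'] at this
    calc u * (Real.log w - Real.log u) ≤ u * (w / u - 1) := by gcongr
      _ = _ := by field_simp
  induction k with
  | zero => simp; rw [abs_of_nonneg (by linarith)]
  | succ k ih =>
    have e : w * Real.log w ^ (k + 1) - u * Real.log u ^ (k + 1) =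
      Real.log w * (w * Real.log w ^ k - u * Real.log u ^ k) + (u * (Real.log w - Real.log u)) * Real.log u ^ k := by ring
    rw [e]
    have hd : 0 ≤ w - u := by linarith
    have hd2 : 0 ≤ Real.log w - Real.log u := by linarith
    calc _ ≤ Real.log w * |w * Real.log w ^ k - u * Real.log u ^ k| + (u * (Real.log w - Real.log u)) * Real.log u ^ k := by
          refine (abs_add_le _ _).trans ?_
          rw [abs_mul, abs_of_nonneg l3, abs_of_nonneg (by positivity : 0 ≤ (u * (Real.log w - Real.log u)) * Real.log u ^ k)]
      _ ≤ (1 + Real.log w) * ((k + 1) * ((w - u) * (1 + Real.log w) ^ k)) + (w - u) * (1 + Real.log w) ^ (k + 1) := by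
          have h5 : Real.log u ^ k ≤ (1 + Real.log w) ^ (k + 1) := by
            calc Real.log u ^ k ≤ (1 + Real.log w) ^ k := by gcongr; linarith
              _ ≤ _ := pow_le_pow_right₀ (by linarith) (by omega)
          gcongr
          linarith
      _ = _ := by push_cast; ring

lemma LogLip.tl {k m : ℕ} (h : k ≤ m) : LogLip m (tl k) := by
  refine ⟨k + 1, by positivity, fun u w hu huw => ?_⟩
  have h0 : 0 ≤ Real.log w := Real.log_nonneg (by linarith)
  have h1 := tl_lip k u w hu huw
  unfold VM.tl
  rw [← Complex.ofReal_sub, Complex.norm_real, Real.norm_eq_abs]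
  refine h1.trans ?_
  have : 0 ≤ w - u := by linarith
  gcongr
  linarith

lemma LogLip.add {m : ℕ} {f g : ℝ → ℂ} (hf : LogLip m f) (hg : LogLip m g) : LogLip m (fun u => f u + g u) := by
  obtain ⟨K, hK, h1⟩ := hf
  obtain ⟨L, hL, h2⟩ := hg
  refine ⟨K + L, by positivity, fun u w hu huw => ?_⟩
  rw [add_sub_add_comm, add_mul]
  exact (norm_add_le _ _).trans (add_le_add (h1 u w hu huw) (h2 u w hu huw))

lemma LogLip.const_mul {m : ℕ} {f : ℝ → ℂ} (hf : LogLip m f) (a : ℂ) : LogLip m (fun u => a * f u) := by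
  obtain ⟨K, hK, h1⟩ := hf
  refine ⟨‖a‖ * K, by positivity, fun u w hu huw => ?_⟩
  rw [← mul_sub, norm_mul, mul_assoc]
  gcongr
  exact h1 u w hu huw

lemma LogLip.sum {m : ℕ} {f : ℕ → ℝ → ℂ} (s : Finset ℕ) (hf : ∀ i ∈ s, LogLip m (f i)) : LogLip m (fun u => ∑ i ∈ s, f i u) := by
  induction s using Finset.induction_on with
  | empty => exact ⟨0, le_rfl, fun u w _ _ => by simp⟩
  | insert a s ha ih =>
    simp only [Finset.sum_insert ha]
    exact (hf a (by simp)).add (ih (fun i hi => hf i (by simp [hi])))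

lemma LogLip.bound {m : ℕ} {f : ℝ → ℂ} (hf : LogLip m f) :
    ∃ K : ℝ, 0 ≤ K ∧ ∀ u : ℝ, 1 ≤ u → ‖f u‖ ≤ K * (u * (1 + Real.log u) ^ m) := by
  obtain ⟨K, hK, h1⟩ := hf
  refine ⟨‖f 1‖ + K, by positivity, fun u hu => ?_⟩
  have h := h1 1 u le_rfl hu
  have h0 : 0 ≤ Real.log u := Real.log_nonneg hu
  have h2 : 1 ≤ (1 + Real.log u) ^ m := one_le_pow₀ (by linarith)
  have h3 : 1 ≤ u * (1 + Real.log u) ^ m := by nlinarith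
  calc ‖f u‖ ≤ ‖f 1‖ + ‖f u - f 1‖ := by
        have := norm_add_le (f 1) (f u - f 1); simpa using this
    _ ≤ ‖f 1‖ * (u * (1 + Real.log u) ^ m) + K * (u * (1 + Real.log u) ^ m) := by
        gcongr
        · nlinarith [norm_nonneg (f 1)]
        · refine h.trans ?_
          gcongr; linarith
    _ = _ := by ring

/-- the sign-factorial constant -/
noncomputable def al (n : ℕ) : ℂ := (-1) ^ (n + 1) * n.factorial

/-- main term -/
noncomputable def Mn (n : ℕ) (u : ℝ) : ℂ :=
  al n / (n + 1).factorial * tl (n + 1) u +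
    ∑ k ∈ range (n + 1), al n * ds k V 1 / (n - k).factorial * tl (n - k) u + iteratedDeriv n H 1 * tl 0 u

lemma Mn_lip (n : ℕ) : LogLip (n + 1) (Mn n) :=
  (((LogLip.tl le_rfl).const_mul _).add (LogLip.sum _ fun k _ => (LogLip.tl (by omega)).const_mul _)).add
    ((LogLip.tl (by omega)).const_mul _)

lemma tl_meas (k : ℕ) : Measurable (tl k) := by unfold tl; fun_prop

lemma Mn_meas (n : ℕ) : Measurable (Mn n) := by
  unfold Mn
  have := tl_meas
  fun_prop

lemma Mn_eq {n : ℕ} {C A : ℕ → ℂ}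
    (hC : ∀ᶠ s in nhdsWithin (1 : ℂ) {(1 : ℂ)}ᶜ,
      HasSum (fun j : ℕ => C j * (s - 1) ^ j) (riemannZeta s - 1 / (s - 1)))
    (hA : ∀ᶠ s in nhdsWithin (1 : ℂ) {(1 : ℂ)}ᶜ,
      HasSum (fun j : ℕ => A j * (s - 1) ^ j)
        (deriv riemannZeta s / riemannZeta s + 1 / (s - 1))) (u : ℝ) : Mn n u = Mterm C A n u := by
  unfold Mn Mterm
  congr 1
  · congr 1
    · unfold tl al
      congr 1
      rw [Nat.factorial_succ]
      have : ((n.factorial : ℕ) : ℂ) ≠ 0 := by exact_mod_cast n.factorial_ne_zero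
      have h2 : (n : ℂ) + 1 ≠ 0 := by exact_mod_cast n.succ_ne_zero
      push_cast
      field_simp
    · rw [Finset.mul_sum]
      refine Finset.sum_congr rfl fun k hk => ?_
      have hk' : k ≤ n := by simp at hk; omega
      rw [V_coeff hC k, ← mul_assoc ((-1 : ℂ) ^ (n + 1)) _ ((u * Real.log u ^ (n - k) : ℝ) : ℂ)]
      unfold tl al
      congr 1
      have h1 : ((n.choose k : ℕ) : ℂ) * k.factorial * (n - k).factorial = n.factorial := by
        exact_mod_cast Nat.choose_mul_factorial_mul_factorial hk'
      have h2 : (((n - k).factorial : ℕ) : ℂ) ≠ 0 := by exact_mod_cast (n-k).factorial_ne_zero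
      rw [← h1]
      field_simp
      try ring
  · rw [Hn_one hA]
    unfold tl
    simp

lemma tl_integrable (k : ℕ) {s : ℂ} (hs : 1 < s.re) :
    IntegrableOn (fun u : ℝ => tl k u * (u : ℂ) ^ (-(s + 1))) (Set.Ioi 1) :=
  kernel_integrable (tl_meas k) (log_kernel_bound k) hs

lemma Mn_integral (n : ℕ) {s : ℂ} (hs : 1 < s.re) :
    ∫ u in Set.Ioi (1:ℝ), Mn n u * (u : ℂ) ^ (-(s + 1)) =
      al n / (s - 1) ^ (n + 2) + ∑ k ∈ range (n + 1), al n * ds k V 1 / (s - 1) ^ (n - k + 1) + iteratedDeriv n H 1 / (s - 1) := by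
  have hi := fun k => tl_integrable k hs
  have hl : ∀ k, ∫ u in Set.Ioi (1:ℝ), tl k u * (u : ℂ) ^ (-(s + 1)) = k.factorial / (s - 1) ^ (k + 1) :=
    fun k => log_integral k hs
  have hf : ∀ k : ℕ, (k.factorial : ℂ) ≠ 0 := fun k => by exact_mod_cast k.factorial_ne_zero
  unfold Mn
  simp only [add_mul, Finset.sum_mul, mul_assoc]
  rw [integral_add, integral_add, integral_finsetSum]
  · simp only [integral_const_mul, hl]
    congr 1
    · congr 1
      · have := hf (n + 1)
        field_simp
      · refine Finset.sum_congr rfl fun k _ => ?_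
        have := hf (n - k)
        field_simp
    · simp; ring
  · exact fun k _ => (hi _).const_mul _
  · exact (hi _).const_mul _
  · exact integrable_finsetSum _ fun k _ => (hi _).const_mul _
  · exact ((hi _).const_mul _).add (integrable_finsetSum _ fun k _ => (hi _).const_mul _)
  · exact (hi _).const_mul _

/-- the error term -/
noncomputable def Er (n : ℕ) (u : ℝ) : ℂ := (-1) ^ (n + 1) * (vonMangoldtPairSum n u : ℂ) - Mn n u

lemma S_meas (n : ℕ) : Measurable (fun u => (vonMangoldtPairSum n u : ℂ)) :=
  Complex.measurable_ofReal.comp (pairSum_mono n).measurable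

lemma Er_meas (n : ℕ) : Measurable (Er n) := ((S_meas n).const_mul _).sub (Mn_meas n)

lemma S_bound (n : ℕ) : ∀ u : ℝ, 1 ≤ u → ‖(vonMangoldtPairSum n u : ℂ)‖ ≤ 1 * (u * (1 + Real.log u) ^ (n + 1)) := by
  intro u hu
  rw [Complex.norm_real, Real.norm_of_nonneg (pairSum_nonneg n u), one_mul]
  exact pairSum_le n hu

lemma Er_bound (n : ℕ) : ∃ K : ℝ, 0 ≤ K ∧ ∀ u : ℝ, 1 ≤ u → ‖Er n u‖ ≤ K * (u * (1 + Real.log u) ^ (n + 1)) := by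
  obtain ⟨K, hK, h⟩ := (Mn_lip n).bound
  refine ⟨1 + K, by positivity, fun u hu => ?_⟩
  unfold Er
  rw [add_mul]
  refine (norm_sub_le _ _).trans (add_le_add ?_ (h u hu))
  rw [norm_mul, norm_pow, norm_neg, norm_one, one_pow, one_mul]
  exact S_bound n u hu

lemma Er_integral (n : ℕ) {s : ℂ} (hs : 1 < s.re) :
    ∫ u in Set.Ioi (1:ℝ), Er n u * (u : ℂ) ^ (-(s + 1)) = G n s := by
  have hs0 : s ≠ 0 := ne_zero_of_RH (by linarith)
  have hsne : s ≠ 1 := by rintro rfl; simp at hs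
  have hs1 : s - 1 ≠ 0 := sub_ne_zero.mpr hsne
  obtain ⟨K, hK, h⟩ := (Mn_lip n).bound
  have i1 := kernel_integrable (S_meas n) (S_bound n) hs
  have i2 := kernel_integrable (Mn_meas n) h hs
  have e0 : ∀ u : ℝ, Er n u * (u : ℂ) ^ (-(s + 1)) = (-1) ^ (n + 1) * ((vonMangoldtPairSum n u : ℂ) * (u : ℂ) ^ (-(s + 1))) - Mn n u * (u : ℂ) ^ (-(s + 1)) := by
    intro u; unfold Er; ring
  simp only [e0]
  rw [integral_sub (i1.const_mul _) i2, integral_const_mul, Mn_integral n hs]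
  have h1 := acoef_LSeries n hs
  rw [acoef_integral n hs] at h1
  set J := ∫ u in Set.Ioi (1:ℝ), (vonMangoldtPairSum n u : ℂ) * (u : ℂ) ^ (-(s + 1)) with hJ
  have hz : riemannZeta s = s * (1 / (s - 1) + V s) := by
    rw [zeta_eq hsne]; unfold V; field_simp; ring
  have h2 : (-1) ^ (n + 1) * J = (1 / (s - 1) + V s) * (al n / (s - 1) ^ (n + 1) + iteratedDeriv n H s) := by
    have : s * ((-1) ^ (n + 1) * J) = s * ((1 / (s - 1) + V s) * (al n / (s - 1) ^ (n + 1) + iteratedDeriv n H s)) := by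
      rw [hz] at h1; unfold al; linear_combination h1
    exact mul_left_cancel₀ hs0 this
  have h3 : dslope (iteratedDeriv n H) 1 s = (iteratedDeriv n H s - iteratedDeriv n H 1) / (s - 1) := by
    rw [dslope_of_ne _ hsne, slope_def_field]
  have h4 : ∑ k ∈ range (n + 1), al n * ds k V 1 / (s - 1) ^ (n - k + 1) = al n / (s - 1) ^ (n + 1) * (V s - (s - 1) ^ (n + 1) * ds (n + 1) V s) := by
    rw [← eq_sub_of_add_eq (ds_expand V (n + 1) s).symm, Finset.mul_sum]
    refine Finset.sum_congr rfl fun k hk => ?_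
    have hk' : k ≤ n := by simp at hk; omega
    have : (s - 1) ^ (n + 1) = (s - 1) ^ (n - k + 1) * (s - 1) ^ k := by rw [← pow_add]; congr 1; omega
    rw [this]
    field_simp
  rw [h2, h4]
  unfold G
  rw [h3]
  unfold al
  have hp : (s - 1) ^ (n + 2) = (s - 1) ^ (n + 1) * (s - 1) := pow_succ _ _
  rw [hp]
  field_simp
  ring
end VM

namespace VM
open Metric Filter Topology MeasureTheory

/-- smoothing kernel -/
noncomputable def phi (t : ℝ) : ℂ := ((max (1 - t) 0 : ℝ) : ℂ)

lemma phi_cont : Continuous phi := by unfold phi; fun_prop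

lemma phi_eq {t : ℝ} (ht : 0 < t) : phi t = (Set.Ioc 0 1).indicator (fun _ => 1 : ℝ → ℂ) t -
    (Set.Ioc 0 1).indicator (fun t => (t:ℂ) ^ (1:ℂ) : ℝ → ℂ) t := by
  unfold phi
  by_cases h : t ≤ 1
  · rw [Set.indicator_of_mem (show t ∈ Set.Ioc (0:ℝ) 1 from ⟨ht, h⟩), Set.indicator_of_mem (show t ∈ Set.Ioc (0:ℝ) 1 from ⟨ht, h⟩),
      max_eq_left (by linarith)]
    simp
  · rw [Set.indicator_of_notMem (fun h' => h h'.2), Set.indicator_of_notMem (fun h' => h h'.2),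
      max_eq_right (by linarith)]
    simp

lemma phi_mellin {w : ℂ} (hw : 0 < w.re) : HasMellin phi w (1 / (w * (w + 1))) := by
  have h1 := hasMellin_one_Ioc hw
  have h2 := hasMellin_cpow_Ioc (1:ℂ) (s := w) (by simp; linarith)
  have h3 := hasMellin_sub h1.1 h2.1
  rw [h1.2, h2.2] at h3
  have hw0 : w ≠ 0 := ne_zero_of_RH hw
  have hw1 : w + 1 ≠ 0 := ne_zero_of_RH (by simp; linarith)
  have e : 1 / w - 1 / (w + 1) = 1 / (w * (w + 1)) := by field_simp; ring
  rw [e] at h3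
  constructor
  · refine h3.1.congr_fun (fun t ht => ?_) measurableSet_Ioi
    simp only [phi_eq ht]
  · rw [← h3.2]
    unfold mellin
    refine setIntegral_congr_fun measurableSet_Ioi fun t ht => ?_
    simp only [phi_eq ht]

lemma norm_ww {w : ℂ} (hw : 1 ≤ w.re) : 1 + w.im ^ 2 ≤ ‖w * (w + 1)‖ := by
  have h1 : 1 + w.im ^ 2 ≤ ‖w‖ ^ 2 := by
    rw [← Complex.normSq_eq_norm_sq, Complex.normSq_apply]; nlinarith
  have h2 : 1 + w.im ^ 2 ≤ ‖w + 1‖ ^ 2 := by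
    rw [← Complex.normSq_eq_norm_sq, Complex.normSq_apply]; simp; nlinarith
  rw [norm_mul]
  refine (pow_le_pow_iff_left₀ (by positivity) (by positivity) two_ne_zero).mp ?_
  rw [mul_pow, sq (1 + w.im ^ 2)]
  exact mul_le_mul h1 h2 (by positivity) (by positivity)

lemma norm_inv_ww {w : ℂ} (hw : 1 ≤ w.re) : ‖1 / (w * (w + 1))‖ ≤ (1 + w.im ^ 2)⁻¹ := by
  rw [norm_div, norm_one, one_div]
  exact inv_anti₀ (by positivity) (norm_ww hw)

lemma phi_inv {κ x : ℝ} (hκ : 1 ≤ κ) (hx : 0 < x) :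
    phi x = (1 / (2 * Real.pi) : ℝ) • ∫ y : ℝ, (x : ℂ) ^ (-((κ:ℂ) + y * I)) * (1 / (((κ:ℂ) + y * I) * ((κ:ℂ) + y * I + 1))) := by
  have hm : ∀ y : ℝ, mellin phi ((κ:ℂ) + y * I) = 1 / (((κ:ℂ) + y * I) * ((κ:ℂ) + y * I + 1)) := fun y =>
    (phi_mellin (by simp; linarith)).2
  have h := mellinInv_mellin_eq κ phi hx (phi_mellin (by simp; linarith)).1 ?_ phi_cont.continuousAt
  · rw [← h]
    unfold mellinInv
    simp only [hm, smul_eq_mul]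
  · unfold VerticalIntegrable
    simp only [hm]
    refine integrable_inv_one_add_sq.mono' (by
      refine Measurable.aestronglyMeasurable ?_
      fun_prop) (ae_of_all _ fun y => ?_)
    have := norm_inv_ww (w := (κ:ℂ) + y * I) (by simpa using hκ)
    simpa using this

/-- smoothed error -/
noncomputable def sm (E : ℝ → ℂ) (x : ℝ) : ℂ := ∫ u in Set.Ioi (1:ℝ), E u * phi (u / x)

lemma sm_eq {E : ℝ → ℂ} {K : ℝ} {m : ℕ} (hE : Measurable E)
    (hb : ∀ u : ℝ, 1 ≤ u → ‖E u‖ ≤ K * (u * (1 + Real.log u) ^ m)) {σ x : ℝ} (hσ : 1 < σ) (hx : 0 < x) 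
    {G : ℂ → ℂ} (hG : ∀ s : ℂ, 1 < s.re → ∫ u in Set.Ioi (1:ℝ), E u * (u : ℂ) ^ (-(s + 1)) = G s) :
    Integrable (fun y : ℝ => (x : ℂ) ^ ((σ:ℂ) + y * I + 1) * 
      (1 / (((σ:ℂ) + y * I + 1) * ((σ:ℂ) + y * I + 1 + 1))) * G ((σ:ℂ) + y * I)) ∧
    sm E x = (1 / (2 * Real.pi) : ℝ) • ∫ y : ℝ, (x : ℂ) ^ ((σ:ℂ) + y * I + 1) * 
      (1 / (((σ:ℂ) + y * I + 1) * ((σ:ℂ) + y * I + 1 + 1))) * G ((σ:ℂ) + y * I) := by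
  unfold sm
  set f : ℝ → ℝ → ℂ := fun u y => E u * (u : ℂ) ^ (-((σ:ℂ) + y * I + 1)) * ((x : ℂ) ^ ((σ:ℂ) + y * I + 1) * 
      (1 / (((σ:ℂ) + y * I + 1) * ((σ:ℂ) + y * I + 1 + 1)))) with hf
  have hIntg : Integrable (Function.uncurry f) ((volume.restrict (Set.Ioi (1:ℝ))).prod volume) := by
    have i1 : Integrable (fun u : ℝ => ‖E u * (u : ℂ) ^ (-((σ:ℂ) + 1))‖) (volume.restrict (Set.Ioi (1:ℝ))) :=
      (kernel_integrable hE hb (s := (σ:ℂ)) (by simpa using hσ)).norm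
    have i2 : Integrable (fun y : ℝ => x ^ (σ + 1) * (1 + y ^ 2)⁻¹) volume := integrable_inv_one_add_sq.const_mul _
    refine (i1.mul_prod i2).mono' ?_ ?_
    · refine Measurable.aestronglyMeasurable ?_
      simp only [hf, Function.uncurry_def]
      fun_prop
    · have : ∀ᵐ p ∂((volume.restrict (Set.Ioi (1:ℝ))).prod (volume : Measure ℝ)), p.1 ∈ Set.Ioi (1:ℝ) :=
        Measure.quasiMeasurePreserving_fst.ae (ae_restrict_mem measurableSet_Ioi)
      filter_upwards [this] with p hp
      obtain ⟨u, y⟩ := p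
      have hu0 : 0 < u := lt_trans one_pos hp
      simp only [hf, Function.uncurry_apply_pair, norm_mul]
      rw [Complex.norm_cpow_eq_rpow_re_of_pos hu0, Complex.norm_cpow_eq_rpow_re_of_pos hu0, Complex.norm_cpow_eq_rpow_re_of_pos hx]
      have := norm_inv_ww (w := (σ:ℂ) + y * I + 1) (by simp; linarith)
      simp only [neg_re, add_re, ofReal_re, mul_re, I_re, mul_zero, ofReal_im, I_im, mul_one, sub_self, add_zero, one_re, add_im, mul_im, one_im, zero_add, neg_add_rev] at this ⊢
      gcongr
      · exact le_of_lt hp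
      · simp
  have h1 : ∫ u in Set.Ioi (1:ℝ), E u * phi (u / x) = ∫ u in Set.Ioi (1:ℝ), (1 / (2 * Real.pi) : ℝ) • ∫ y : ℝ, f u y := by
    refine setIntegral_congr_fun measurableSet_Ioi fun u hu => ?_
    have hu0 : 0 < u := lt_trans one_pos hu
    rw [phi_inv (κ := σ + 1) (by linarith) (div_pos hu0 hx), mul_smul_comm, ← integral_const_mul]
    congr 1
    refine integral_congr_ae (ae_of_all _ fun y => ?_)
    simp only [hf]
    have e1 : ((σ + 1 : ℝ) : ℂ) + y * I = (σ:ℂ) + y * I + 1 := by push_cast; ring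
    rw [e1]
    have e2 : ((u / x : ℝ) : ℂ) ^ (-((σ:ℂ) + y * I + 1)) = (u:ℂ) ^ (-((σ:ℂ) + y * I + 1)) * (x : ℂ) ^ ((σ:ℂ) + y * I + 1) := by
      rw [div_eq_mul_inv, Complex.ofReal_mul, Complex.mul_cpow_ofReal_nonneg hu0.le (by positivity), Complex.ofReal_inv,
        Complex.inv_cpow, Complex.cpow_neg (x:ℂ), inv_inv]
      rw [Complex.arg_ofReal_of_nonneg hx.le]; exact Real.pi_pos.ne
    rw [e2]; ring
  have h2 : ∀ y : ℝ, ∫ u in Set.Ioi (1:ℝ), f u y = (x : ℂ) ^ ((σ:ℂ) + y * I + 1) * 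
      (1 / (((σ:ℂ) + y * I + 1) * ((σ:ℂ) + y * I + 1 + 1))) * G ((σ:ℂ) + y * I) := by
    intro y
    simp only [hf]
    rw [integral_mul_const, hG _ (by simpa using hσ), mul_comm]
  constructor
  · have := hIntg.integral_prod_right
    simpa only [Function.uncurry_apply_pair, h2] using this
  · rw [h1, integral_smul, integral_integral_swap hIntg]
    simp only [h2]
end VM

namespace VM
open Metric Filter Topology MeasureTheory

/-- the contour integrand -/
noncomputable def cF (G : ℂ → ℂ) (x : ℝ) (s : ℂ) : ℂ := (x : ℂ) ^ (s + 1) * (1 / ((s + 1) * (s + 1 + 1))) * G s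

lemma cF_norm (G : ℂ → ℂ) {x : ℝ} (hx : 0 < x) {s : ℂ} (hs : 0 ≤ s.re) :
    ‖cF G x s‖ ≤ x ^ (s.re + 1) * (1 + s.im ^ 2)⁻¹ * ‖G s‖ := by
  unfold cF
  rw [norm_mul, norm_mul, Complex.norm_cpow_eq_rpow_re_of_pos hx]
  have := norm_inv_ww (w := s + 1) (by simpa using hs)
  simp only [add_im, one_im, add_zero] at this
  simp only [add_re, one_re]
  gcongr

lemma cF_diff {G : ℂ → ℂ} {x : ℝ} (hx : 0 < x) {s : ℂ} (hs : 0 ≤ s.re) (hG : DifferentiableAt ℂ G s) :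
    DifferentiableAt ℂ (cF G x) s := by
  have hx' : (x:ℂ) ≠ 0 := by exact_mod_cast hx.ne'
  have h1 : s + 1 ≠ 0 := ne_zero_of_RH (by simp; linarith)
  have h2 : s + 1 + 1 ≠ 0 := ne_zero_of_RH (by simp; linarith)
  unfold cF
  refine DifferentiableAt.mul (DifferentiableAt.mul ?_ ?_) hG
  · exact DifferentiableAt.const_cpow (by fun_prop) (Or.inl hx')
  · exact (differentiableAt_const _).div (by fun_prop) (mul_ne_zero h1 h2)

lemma rect_bound {G : ℂ → ℂ} {x r c K : ℝ} {p : ℕ} (hc : 0 < c) (hc2 : c ≤ 1 / 2) (hr : 1 / c ≤ r)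
    (hx : 0 < x) (hxr : Real.log x = r ^ 2) (hK : 0 < K)
    (hG : ∀ s : ℂ, |s.im| ≤ Real.exp r → |s.re - 1| ≤ c / r → DifferentiableAt ℂ G s ∧ ‖G s‖ ≤ K * r ^ p) :
    ‖∫ y in (-Real.exp r)..(Real.exp r), cF G x ((1 + 1 / r ^ 2 : ℝ) + y * I)‖ ≤
      K * (Real.pi + 2 * Real.exp 1) * (x ^ 2 * (r ^ p * Real.exp (-c * r))) := by
  have hr2 : 2 ≤ r := le_trans (by rw [le_div_iff₀ hc]; linarith) hr
  have hr0 : 0 < r := by linarith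
  have hcr : c / r ≤ 1 / 4 := by rw [div_le_iff₀ hr0]; linarith
  have hcr0 : 0 < c / r := by positivity
  have hir : 1 / r ^ 2 ≤ c / r := by
    rw [div_le_div_iff₀ (by positivity) hr0]
    have : 1 ≤ c * r := by rwa [div_le_iff₀' hc] at hr
    nlinarith
  have hir0 : 0 < 1 / r ^ 2 := by positivity
  have hx1 : 1 ≤ x := by
    rw [← Real.log_nonneg_iff hx, hxr]; positivity
  have hxpow : ∀ a : ℝ, x ^ a = Real.exp (r ^ 2 * a) := fun a => by rw [Real.rpow_def_of_pos hx, hxr]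
  have hxsq : x ^ 2 = Real.exp (r ^ 2 * 2) := by rw [← hxpow 2, Real.rpow_two]
  set T := Real.exp r with hT
  have hT0 : 0 < T := Real.exp_pos r
  set σ : ℝ := 1 + 1 / r ^ 2 with hσ
  set β : ℝ := 1 - c / r with hβ
  have hβσ : β ≤ σ := by linarith
  have hregion : ∀ s : ℂ, |s.im| ≤ T → β ≤ s.re → s.re ≤ σ → DifferentiableAt ℂ (cF G x) s ∧
      ‖cF G x s‖ ≤ x ^ (s.re + 1) * (1 + s.im ^ 2)⁻¹ * (K * r ^ p) := by
    intro s h1 h2 h3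
    obtain ⟨h4, h5⟩ := hG s h1 (by rw [abs_le]; constructor <;> linarith)
    have h6 : 0 ≤ s.re := by linarith
    exact ⟨cF_diff hx h6 h4, (cF_norm G hx h6).trans (by gcongr)⟩
  have hrect := Complex.integral_boundary_rect_eq_zero_of_differentiableOn (cF G x) (⟨β, -T⟩ : ℂ) (⟨σ, T⟩ : ℂ) (by
    intro s hs
    rw [Complex.mem_reProdIm, Set.uIcc_of_le hβσ, Set.uIcc_of_le (by simp; linarith)] at hs
    exact (hregion s (abs_le.mpr ⟨hs.2.1, hs.2.2⟩) hs.1.1 hs.1.2).1.differentiableWithinAt)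
  simp only at hrect
  have hσp : x ^ (σ + 1) = x ^ 2 * Real.exp 1 := by
    rw [hxpow, hxsq, ← Real.exp_add]; congr 1; rw [hσ]; field_simp; ring
  have hβp : x ^ (β + 1) = x ^ 2 * Real.exp (-c * r) := by
    rw [hxpow, hxsq, ← Real.exp_add]; congr 1; rw [hβ]; field_simp; ring
  have hTe : (1 + T ^ 2)⁻¹ ≤ Real.exp (-c * r) := by
    have : Real.exp (-c * r) = (Real.exp (c * r))⁻¹ := by rw [neg_mul, Real.exp_neg]
    rw [this]
    apply inv_anti₀ (Real.exp_pos _)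
    have h1 : Real.exp (c * r) ≤ T := Real.exp_le_exp.mpr (by nlinarith)
    nlinarith [sq_nonneg (T - 1)]
  have hhor : ∀ t : ℝ, |t| = T → ‖∫ v in β..σ, cF G x ((v:ℂ) + (t : ℂ) * I)‖ ≤ K * Real.exp 1 * (x ^ 2 * (r ^ p * Real.exp (-c * r))) := by
    intro t ht
    have : ∀ v ∈ Set.uIoc β σ, ‖cF G x ((v:ℂ) + (t : ℂ) * I)‖ ≤ K * Real.exp 1 * (x ^ 2 * (r ^ p * Real.exp (-c * r))) := by
      intro v hv
      rw [Set.uIoc_of_le hβσ] at hv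
      have h := (hregion ((v:ℂ) + (t : ℂ) * I) (by simp [ht]) (by simpa using hv.1.le) (by simpa using hv.2)).2
      simp only [add_re, ofReal_re, mul_re, I_re, mul_zero, ofReal_im, I_im, mul_one, sub_self, add_zero, add_im, mul_im, zero_add] at h
      refine h.trans ?_
      calc _ ≤ x ^ (σ + 1) * Real.exp (-c * r) * (K * r ^ p) := by
            have e : t ^ 2 = T ^ 2 := by rw [← ht, sq_abs]
            rw [e]
            gcongr
            exact hv.2
        _ = _ := by rw [hσp]; ring
    refine (intervalIntegral.norm_integral_le_of_norm_le_const this).trans ?_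
    refine mul_le_of_le_one_right (by positivity) ?_
    rw [abs_of_nonneg (by linarith)]
    linarith
  have hleft : ‖∫ y in (-T)..T, cF G x ((β:ℂ) + y * I)‖ ≤ K * Real.pi * (x ^ 2 * (r ^ p * Real.exp (-c * r))) := by
    have hTT : -T ≤ T := by linarith
    have hi : Integrable (fun y : ℝ => x ^ 2 * Real.exp (-c * r) * (K * r ^ p) * (1 + y ^ 2)⁻¹) := integrable_inv_one_add_sq.const_mul _
    have h1 : ‖∫ y in (-T)..T, cF G x ((β:ℂ) + y * I)‖ ≤ ∫ y in (-T)..T, x ^ 2 * Real.exp (-c * r) * (K * r ^ p) * (1 + y ^ 2)⁻¹ := by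
      refine intervalIntegral.norm_integral_le_of_norm_le hTT (ae_of_all _ fun y hy => ?_) hi.intervalIntegrable
      have h := (hregion ((β:ℂ) + (y : ℂ) * I) (by simpa using abs_le.mpr ⟨hy.1.le, hy.2⟩) (by simp) (by simpa using hβσ)).2
      simp only [add_re, ofReal_re, mul_re, I_re, mul_zero, ofReal_im, I_im, mul_one, sub_self, add_zero, add_im, mul_im, zero_add] at h
      rw [hβp] at h
      refine h.trans (le_of_eq (by ring))
    refine h1.trans ?_
    rw [intervalIntegral.integral_of_le hTT]
    calc _ ≤ ∫ y : ℝ, x ^ 2 * Real.exp (-c * r) * (K * r ^ p) * (1 + y ^ 2)⁻¹ :=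
          setIntegral_le_integral hi (ae_of_all _ fun y => by positivity)
      _ = _ := by rw [integral_const_mul, integral_univ_inv_one_add_sq]; ring
  have hA := hhor (-T) (by rw [abs_neg, abs_of_pos hT0])
  have hB := hhor T (abs_of_pos hT0)
  have e : I • (∫ y in (-T)..T, cF G x ((σ:ℂ) + y * I)) = I • (∫ y in (-T)..T, cF G x ((β:ℂ) + y * I)) +
      (∫ v in β..σ, cF G x ((v:ℂ) + (T : ℂ) * I)) - (∫ v in β..σ, cF G x ((v:ℂ) + ((-T : ℝ) : ℂ) * I)) := by
    linear_combination hrect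
  have e2 := congrArg norm e
  rw [norm_smul, Complex.norm_I, one_mul] at e2
  rw [e2]
  refine (norm_sub_le _ _).trans ((add_le_add (norm_add_le _ _) le_rfl).trans ?_)
  rw [norm_smul, Complex.norm_I, one_mul]
  linarith

lemma line_bound {G : ℂ → ℂ} {x r K : ℝ} (hr : 1 ≤ r)
    (hx : 0 < x) (hxr : Real.log x = r ^ 2) (hK : 0 ≤ K) 
    (hi : Integrable (fun y : ℝ => cF G x ((1 + 1 / r ^ 2 : ℝ) + y * I)))
    (hG : ∀ y : ℝ, ‖G ((1 + 1 / r ^ 2 : ℝ) + y * I)‖ ≤ K) :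
    ‖∫ y : ℝ, cF G x ((1 + 1 / r ^ 2 : ℝ) + y * I)‖ ≤ 
      ‖∫ y in (-Real.exp r)..(Real.exp r), cF G x ((1 + 1 / r ^ 2 : ℝ) + y * I)‖ +
      K * (Real.exp 1 * ∫ y : ℝ, (1 + ‖y‖ ^ 2) ^ (-(3/2) / 2 : ℝ)) * (x ^ 2 * Real.exp (- r / 2)) := by
  have hr0 : 0 < r := by linarith
  have hxpow : ∀ a : ℝ, x ^ a = Real.exp (r ^ 2 * a) := fun a => by rw [Real.rpow_def_of_pos hx, hxr]
  have hxsq : x ^ 2 = Real.exp (r ^ 2 * 2) := by rw [← hxpow 2, Real.rpow_two]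
  have hσp : x ^ (1 + 1 / r ^ 2 + 1) = x ^ 2 * Real.exp 1 := by
    rw [hxpow, hxsq, ← Real.exp_add]; congr 1; field_simp; ring
  set T := Real.exp r with hT
  have hT0 : 0 < T := Real.exp_pos r
  have hTT : -T ≤ T := by linarith
  rw [intervalIntegral.integral_of_le hTT, ← integral_add_compl (measurableSet_Ioc (a := -T) (b := T)) hi]
  refine (norm_add_le _ _).trans (add_le_add le_rfl ?_)
  have hj : Integrable (fun y : ℝ => (1 + ‖y‖ ^ 2) ^ (-(3/2) / 2 : ℝ)) := integrable_rpow_neg_one_add_norm_sq (by simp; norm_num)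
  have hj' := hj.const_mul (K * Real.exp 1 * (x ^ 2 * Real.exp (- r / 2)))
  have h1 : ‖∫ y in (Set.Ioc (-T) T)ᶜ, cF G x ((1 + 1 / r ^ 2 : ℝ) + y * I)‖ ≤
      ∫ y in (Set.Ioc (-T) T)ᶜ, (K * Real.exp 1 * (x ^ 2 * Real.exp (- r / 2))) * (1 + ‖y‖ ^ 2) ^ (-(3/2) / 2 : ℝ) := by
    refine norm_integral_le_of_norm_le hj'.integrableOn ?_
    refine (ae_restrict_iff' measurableSet_Ioc.compl).mpr (ae_of_all _ fun y hy => ?_)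
    have hy' : T ^ 2 ≤ 1 + y ^ 2 := by
      have : T ≤ |y| := by
        by_contra! h
        rw [abs_lt] at h
        exact hy ⟨h.1, h.2.le⟩
      have := pow_le_pow_left₀ hT0.le this 2
      rw [sq_abs] at this
      linarith
    have h2 := cF_norm G hx (s := (1 + 1 / r ^ 2 : ℝ) + y * I) (by
      have : 0 < 1 / r ^ 2 := by positivity
      simp only [add_re, ofReal_re, mul_re, I_re, mul_zero, ofReal_im, I_im, mul_one, sub_self, add_zero]
      linarith)
    simp only [add_re, ofReal_re, mul_re, I_re, mul_zero, ofReal_im, I_im, mul_one, sub_self, add_zero, add_im, mul_im, zero_add, hσp] at h2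
    refine h2.trans ?_
    have h3 : (1 + y ^ 2)⁻¹ ≤ Real.exp (- r / 2) * (1 + ‖y‖ ^ 2) ^ (-(3/2) / 2 : ℝ) := by
      rw [Real.norm_eq_abs, sq_abs, ← Real.rpow_neg_one]
      have hp : 0 < 1 + y ^ 2 := by positivity
      have : (-1 : ℝ) = (-(1/4)) + (-(3/2) / 2) := by norm_num
      rw [this, Real.rpow_add hp]
      gcongr
      calc (1 + y ^ 2) ^ (-(1/4) : ℝ) ≤ (T ^ 2) ^ (-(1/4) : ℝ) :=
            Real.rpow_le_rpow_of_nonpos (by positivity) hy' (by norm_num)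
        _ = Real.exp (-r / 2) := by
            rw [hT, ← Real.exp_nat_mul, ← Real.exp_mul]; congr 1; push_cast; ring
    calc _ ≤ x ^ 2 * Real.exp 1 * (Real.exp (- r / 2) * (1 + ‖y‖ ^ 2) ^ (-(3/2) / 2 : ℝ)) * K := by
          gcongr
          exact hG y
      _ = _ := by ring
  refine h1.trans ((setIntegral_le_integral hj' (ae_of_all _ fun y => by positivity)).trans ?_)
  rw [integral_const_mul]
  exact le_of_eq (by ring)

end VM

namespace VM
open Metric Filter Topology MeasureTheory

lemma pow_exp_eventually (q : ℕ) {c : ℝ} (hc : 0 < c) : ∃ r₀ : ℝ, ∀ r ≥ r₀, r ^ q * Real.exp (-c * r) ≤ Real.exp (-(c / 2) * r) := by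
  have h := (isLittleO_pow_exp_pos_mul_atTop q (half_pos hc)).bound (one_pos)
  obtain ⟨r₀, h⟩ := eventually_atTop.mp h
  refine ⟨max r₀ 0, fun r hr => ?_⟩
  have h1 := h r (le_trans (le_max_left _ _) hr)
  have hr0 : 0 ≤ r := le_trans (le_max_right _ _) hr
  rw [one_mul, Real.norm_of_nonneg (by positivity), Real.norm_of_nonneg (by positivity)] at h1
  calc _ ≤ Real.exp (c / 2 * r) * Real.exp (-c * r) := by gcongr
    _ = _ := by rw [← Real.exp_add]; congr 1; ring

lemma sm_Er (n : ℕ) : ∃ a > (0:ℝ), ∃ K > (0:ℝ), ∃ x₀ : ℝ, ∀ x ≥ x₀,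
    ‖sm (Er n) x‖ ≤ K * (x ^ 2 * Real.exp (-a * Real.sqrt (Real.log x))) := by
  obtain ⟨c, hc, hc2, K2, hK2, T₁, hT₁, hG⟩ := G_bound n
  obtain ⟨K1, hK1, hE⟩ := Er_bound n
  set q := (n + 2) + 2 * (n + 2) with hq
  obtain ⟨r₀, hr₀⟩ := pow_exp_eventually q hc
  set J := ∫ y : ℝ, (1 + ‖y‖ ^ 2) ^ (-(3/2) / 2 : ℝ) with hJ
  have hJ0 : 0 ≤ J := integral_nonneg fun y => by positivity
  set K3 : ℝ := 2 * K1 * (2 * (n + 1 : ℕ) + 3) ^ (n + 1) with hK3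
  have hK30 : 0 ≤ K3 := by positivity
  set R := max r₀ (max (1 / c) (Real.log T₁)) with hR
  refine ⟨c / 2, by positivity, K2 * (Real.pi + 2 * Real.exp 1) + K3 * (Real.exp 1 * J), by positivity,
    Real.exp ((max R 1) ^ 2), fun x hx => ?_⟩
  have hx0 : 0 < x := lt_of_lt_of_le (Real.exp_pos _) hx
  have hlx : (max R 1) ^ 2 ≤ Real.log x := by rwa [ge_iff_le, ← Real.le_log_iff_exp_le hx0] at hx
  set r := Real.sqrt (Real.log x) with hr
  have hxr : Real.log x = r ^ 2 := by rw [hr, Real.sq_sqrt]; exact le_trans (by positivity) hlx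
  have hrR : max R 1 ≤ r := Real.le_sqrt_of_sq_le hlx
  have hr1 : 1 ≤ r := (le_max_right _ _).trans hrR
  have hrR' : R ≤ r := (le_max_left _ _).trans hrR
  have hrr0 : r₀ ≤ r := (le_max_left _ _).trans hrR'
  have hrc : 1 / c ≤ r := ((le_max_left _ _).trans (le_max_right _ _)).trans hrR'
  have hrT : Real.log T₁ ≤ r := ((le_max_right _ _).trans (le_max_right _ _)).trans hrR'
  have hTr : T₁ ≤ Real.exp r := by rwa [Real.log_le_iff_le_exp (by linarith)] at hrT
  have hr0 : 0 < r := by linarith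
  have hi0 : 0 < 1 / r ^ 2 := by positivity
  have hi1 : 1 / r ^ 2 ≤ 1 := by
    rw [div_le_one (by positivity)]; exact one_le_pow₀ hr1
  have hs := sm_eq (Er_meas n) hE (σ := 1 + 1 / r ^ 2) (by linarith) hx0 (G := G n) (fun s hs => Er_integral n hs)
  have hline := line_bound (G := G n) (K := K3 * r ^ (2 * (n + 2))) hr1 hx0 hxr (by positivity) hs.1 (by
    intro y
    have hre : ((1 + 1 / r ^ 2 : ℝ) + y * I : ℂ).re = 1 + 1 / r ^ 2 := by simp only [add_re, ofReal_re, mul_re, I_re, mul_zero, ofReal_im, I_im, mul_one, sub_self, add_zero]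
    have h := kernel_norm hE (s := (1 + 1 / r ^ 2 : ℝ) + y * I) (by rw [hre]; linarith) (by rw [hre]; linarith)
    rw [Er_integral n (by rw [hre]; linarith), hre] at h
    refine h.trans (le_of_eq ?_)
    rw [hK3, add_sub_cancel_left, one_div_one_div, ← pow_mul])
  have hrect := rect_bound (p := n + 2) hc hc2 hrc hx0 hxr hK2 (G := G n) (fun s h1 h2 => by
    have := hG (Real.exp r) hTr s h1 (by rwa [Real.log_exp])
    rwa [Real.log_exp] at this)
  have hfin := hr₀ r hrr0
  have hpi : ‖(1 / (2 * Real.pi) : ℝ)‖ ≤ 1 := by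
    rw [Real.norm_of_nonneg (by positivity), div_le_one (by positivity)]
    linarith [Real.pi_gt_three]
  have b1 : r ^ (n + 2) * Real.exp (-c * r) ≤ Real.exp (-(c / 2) * r) := by
    refine le_trans ?_ hfin
    gcongr
    omega
  have b2 : r ^ (2 * (n + 2)) * Real.exp (-r / 2) ≤ Real.exp (-(c / 2) * r) := by
    refine le_trans ?_ hfin
    gcongr
    · omega
    · nlinarith
  rw [hs.2, norm_smul]
  calc _ ≤ 1 * (K2 * (Real.pi + 2 * Real.exp 1) * (x ^ 2 * (r ^ (n + 2) * Real.exp (-c * r))) + 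
        K3 * r ^ (2 * (n + 2)) * (Real.exp 1 * J) * (x ^ 2 * Real.exp (-r / 2))) := by
        exact mul_le_mul hpi (hline.trans (add_le_add hrect le_rfl)) (norm_nonneg _) zero_le_one
    _ = K2 * (Real.pi + 2 * Real.exp 1) * (x ^ 2 * (r ^ (n + 2) * Real.exp (-c * r))) + 
        K3 * (Real.exp 1 * J) * (x ^ 2 * (r ^ (2 * (n + 2)) * Real.exp (-r / 2))) := by ring
    _ ≤ K2 * (Real.pi + 2 * Real.exp 1) * (x ^ 2 * Real.exp (-(c / 2) * r)) + 
        K3 * (Real.exp 1 * J) * (x ^ 2 * Real.exp (-(c / 2) * r)) := by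
        gcongr
    _ = _ := by ring
end VM

namespace VM
open Metric Filter Topology MeasureTheory

/-- positive part kernel -/
noncomputable def pk (z u : ℝ) : ℝ := max (z - u) 0

/-- second difference of the positive part kernel -/
noncomputable def kk (y h u : ℝ) : ℝ := pk (y + 2 * h) u - 2 * pk (y + h) u + pk y u

lemma kk_zero_left {y h u : ℝ} (hh : 0 < h) (hu : u ≤ y) : kk y h u = 0 := by
  unfold kk pk
  rw [max_eq_left (by linarith), max_eq_left (by linarith), max_eq_left (by linarith)]; ring

lemma kk_zero_right {y h u : ℝ} (hh : 0 < h) (hu : y + 2 * h ≤ u) : kk y h u = 0 := by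
  unfold kk pk
  rw [max_eq_right (by linarith), max_eq_right (by linarith), max_eq_right (by linarith)]; ring

lemma kk_nonneg {y h u : ℝ} (hh : 0 < h) : 0 ≤ kk y h u := by
  by_cases h1 : u ≤ y
  · rw [kk_zero_left hh h1]
  by_cases h2 : y + 2 * h ≤ u
  · rw [kk_zero_right hh h2]
  unfold kk pk
  rw [max_eq_left (by linarith : (0:ℝ) ≤ y + 2 * h - u), max_eq_right (by linarith : y - u ≤ (0:ℝ))]
  rcases max_cases (y + h - u) 0 with ⟨e, _⟩ | ⟨e, _⟩ <;> rw [e] <;> linarith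

/-- twice-smoothed integral -/
noncomputable def W (f : ℝ → ℂ) (z : ℝ) : ℂ := ∫ u in Set.Ioi (1:ℝ), f u * (pk z u : ℂ)

lemma W_eq (f : ℝ → ℂ) {z : ℝ} (hz : 0 < z) : W f z = z * sm f z := by
  unfold W sm
  rw [← integral_const_mul]
  congr 1
  ext u
  have : (pk z u : ℂ) = z * phi (u / z) := by
    unfold pk phi
    rw [← Complex.ofReal_mul, mul_max_of_nonneg _ _ hz.le, mul_zero]
    congr 2
    field_simp
  rw [this]; ring

lemma pk_integrable {f : ℝ → ℂ} {K : ℝ} {m : ℕ} (hE : Measurable f)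
    (hb : ∀ u : ℝ, 1 ≤ u → ‖f u‖ ≤ K * (u * (1 + Real.log u) ^ m)) (z : ℝ) :
    IntegrableOn (fun u : ℝ => f u * (pk z u : ℂ)) (Set.Ioi 1) := by
  have hK : 0 ≤ K := by
    have := (norm_nonneg _).trans (hb 1 le_rfl)
    simpa using this
  have hi : Integrable ((Set.Ioc 1 z).indicator (fun _ => K * (z * (1 + Real.log z) ^ m) * z)) :=
    (integrable_indicator_iff measurableSet_Ioc).mpr (integrableOn_const (by simp))
  refine Integrable.mono' hi.integrableOn ?_ ?_
  · refine Measurable.aestronglyMeasurable ?_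
    unfold pk
    fun_prop
  · refine (ae_restrict_iff' measurableSet_Ioi).mpr (ae_of_all _ fun u hu => ?_)
    have hu1 : 1 < u := hu
    by_cases h : u ≤ z
    · rw [Set.indicator_of_mem (show u ∈ Set.Ioc 1 z from ⟨hu, h⟩), norm_mul, Complex.norm_real]
      unfold pk
      rw [max_eq_left (by linarith), Real.norm_of_nonneg (by linarith)]
      have hl : Real.log u ≤ Real.log z := Real.log_le_log (by linarith) h
      have hl0 := Real.log_nonneg hu1.le
      have h2 : ‖f u‖ ≤ K * (z * (1 + Real.log z) ^ m) := (hb u hu1.le).trans (by gcongr; linarith)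
      have : 0 ≤ Real.log z := by linarith
      have : 0 < z := by linarith
      gcongr
      linarith
    · rw [Set.indicator_of_notMem (fun h' => h h'.2)]
      unfold pk
      rw [max_eq_right (by linarith)]
      simp

lemma kk_integrable {f : ℝ → ℂ} {K : ℝ} {m : ℕ} (hE : Measurable f)
    (hb : ∀ u : ℝ, 1 ≤ u → ‖f u‖ ≤ K * (u * (1 + Real.log u) ^ m)) (y h : ℝ) :
    IntegrableOn (fun u : ℝ => f u * (kk y h u : ℂ)) (Set.Ioi 1) ∧
    ∫ u in Set.Ioi (1:ℝ), f u * (kk y h u : ℂ) = W f (y + 2 * h) - 2 * W f (y + h) + W f y := by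
  have e : ∀ u, f u * (kk y h u : ℂ) = f u * (pk (y + 2 * h) u : ℂ) - 2 * (f u * (pk (y + h) u : ℂ)) + f u * (pk y u : ℂ) := by
    intro u; unfold kk; push_cast; ring
  have i1 := pk_integrable hE hb (y + 2 * h)
  have i2 := (pk_integrable hE hb (y + h)).const_mul 2
  have i3 := pk_integrable hE hb y
  simp only [e]
  constructor
  · exact (i1.sub i2).add i3
  · have i12 : Integrable (fun u : ℝ => f u * (pk (y + 2 * h) u : ℂ) - 2 * (f u * (pk (y + h) u : ℂ))) (volume.restrict (Set.Ioi 1)) := i1.sub i2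
    rw [integral_add i12 i3, integral_sub i1 i2, integral_const_mul]; rfl

lemma W_one {z : ℝ} (hz : 1 ≤ z) : W (fun _ => 1) z = (((z - 1) ^ 2 / 2 : ℝ) : ℂ) := by
  unfold W
  simp only [one_mul]
  rw [integral_complex_ofReal]
  congr 1
  have h1 : ∀ u ∈ Set.Ioi (1:ℝ), pk z u = (Set.Ioc 1 z).indicator (fun u => z - u) u := by
    intro u hu
    unfold pk
    by_cases h : u ≤ z
    · rw [Set.indicator_of_mem (show u ∈ Set.Ioc 1 z from ⟨hu, h⟩), max_eq_left (by linarith)]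
    · rw [Set.indicator_of_notMem (fun h' => h h'.2), max_eq_right (by linarith)]
  rw [setIntegral_congr_fun measurableSet_Ioi h1, setIntegral_indicator measurableSet_Ioc,
    Set.inter_eq_self_of_subset_right Set.Ioc_subset_Ioi_self, ← intervalIntegral.integral_of_le hz]
  rw [intervalIntegral.integral_sub (by simp) (by simp), intervalIntegral.integral_const, integral_id, smul_eq_mul]
  ring

lemma one_bound : ∀ u : ℝ, 1 ≤ u → ‖(fun _ : ℝ => (1:ℂ)) u‖ ≤ 1 * (u * (1 + Real.log u) ^ 0) := by
  intro u hu; simpa using hu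

lemma kk_integral {y h : ℝ} (hy : 1 ≤ y) (hh : 0 < h) :
    ∫ u in Set.Ioi (1:ℝ), kk y h u = h ^ 2 := by
  have h1 := (kk_integrable measurable_const one_bound y h).2
  simp only [one_mul] at h1
  rw [integral_complex_ofReal, W_one (by linarith), W_one (by linarith), W_one hy] at h1
  have h2 : ((∫ u in Set.Ioi (1:ℝ), kk y h u : ℝ) : ℂ) = ((h ^ 2 : ℝ) : ℂ) := by
    rw [h1]; push_cast; ring
  exact_mod_cast h2

lemma kk_int_real {y h : ℝ} : IntegrableOn (fun u : ℝ => kk y h u) (Set.Ioi 1) := by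
  have h1 := (kk_integrable measurable_const one_bound y h).1.re
  simp only [IntegrableOn]
  simpa using h1

lemma S_int_real (n : ℕ) {y h : ℝ} : IntegrableOn (fun u : ℝ => vonMangoldtPairSum n u * kk y h u) (Set.Ioi 1) := by
  have h1 := (kk_integrable (S_meas n) (S_bound n) y h).1.re
  simp only [IntegrableOn]
  simpa using h1

lemma avg_bound (n : ℕ) {x y h δ₁ δ₂ : ℝ} (hy : 1 ≤ y) (hh : 0 < h)
    (h1 : ∀ z, y ≤ z → z ≤ y + 2 * h → ‖W (Er n) z‖ ≤ δ₁)
    (h2 : ∀ u, y ≤ u → u ≤ y + 2 * h → ‖Mn n u - Mn n x‖ ≤ δ₂) :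
    ‖((∫ u in Set.Ioi (1:ℝ), vonMangoldtPairSum n u * kk y h u : ℝ) : ℂ) - (-1) ^ (n + 1) * Mn n x * h ^ 2‖ ≤
      4 * δ₁ + δ₂ * h ^ 2 := by
  obtain ⟨K1, hK1, hE⟩ := Er_bound n
  obtain ⟨K2, hK2, hM⟩ := (Mn_lip n).bound
  obtain ⟨i1, e1⟩ := kk_integrable (Er_meas n) hE y h
  obtain ⟨i2, -⟩ := kk_integrable (Mn_meas n) hM y h
  obtain ⟨i3, -⟩ := kk_integrable measurable_const one_bound y h
  simp only [one_mul] at i3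
  have i4 : IntegrableOn (fun u : ℝ => (Mn n u - Mn n x) * (kk y h u : ℂ)) (Set.Ioi 1) := by
    simp only [sub_mul]
    exact i2.sub (i3.const_mul _)
  have hsq : ((-1 : ℂ) ^ (n + 1)) * (-1) ^ (n + 1) = 1 := by
    rw [← mul_pow]; simp
  have hpt : ∀ u : ℝ, ((vonMangoldtPairSum n u * kk y h u : ℝ) : ℂ) = (-1) ^ (n + 1) * (Er n u * (kk y h u : ℂ) +
      ((Mn n u - Mn n x) * (kk y h u : ℂ) + Mn n x * (kk y h u : ℂ))) := by
    intro u; unfold Er; push_cast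
    linear_combination -(vonMangoldtPairSum n u * (kk y h u : ℂ)) * hsq
  rw [← integral_complex_ofReal]
  simp only [hpt]
  have i5 : Integrable (fun u : ℝ => (Mn n u - Mn n x) * (kk y h u : ℂ) + Mn n x * (kk y h u : ℂ)) (volume.restrict (Set.Ioi 1)) :=
    i4.add (i3.const_mul _)
  rw [integral_const_mul, integral_add i1 i5, integral_add i4 (i3.const_mul _), integral_const_mul,
    integral_complex_ofReal, kk_integral hy hh, e1]
  have hd : ‖∫ u in Set.Ioi (1:ℝ), (Mn n u - Mn n x) * (kk y h u : ℂ)‖ ≤ δ₂ * h ^ 2 := by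
    rw [← kk_integral hy hh, ← integral_const_mul]
    refine norm_integral_le_of_norm_le (kk_int_real.const_mul _) (ae_of_all _ fun u => ?_)
    rw [norm_mul, Complex.norm_real, Real.norm_of_nonneg (kk_nonneg hh)]
    by_cases hu1 : u ≤ y
    · rw [kk_zero_left hh hu1]; simp
    by_cases hu2 : y + 2 * h ≤ u
    · rw [kk_zero_right hh hu2]; simp
    exact mul_le_mul_of_nonneg_right (h2 u (by linarith) (by linarith)) (kk_nonneg hh)
  set D := ∫ u in Set.Ioi (1:ℝ), (Mn n u - Mn n x) * (kk y h u : ℂ)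
  have e2 : (-1) ^ (n + 1) * (W (Er n) (y + 2 * h) - 2 * W (Er n) (y + h) + W (Er n) y + (D + Mn n x * ((h ^ 2 : ℝ) : ℂ))) -
      (-1) ^ (n + 1) * Mn n x * h ^ 2 = (-1) ^ (n + 1) * (W (Er n) (y + 2 * h) - 2 * W (Er n) (y + h) + W (Er n) y + D) := by
    push_cast; ring
  rw [e2, norm_mul, norm_pow, norm_neg, norm_one, one_pow, one_mul]
  have a1 := h1 (y + 2 * h) (by linarith) le_rfl
  have a2 := h1 (y + h) (by linarith) (by linarith)
  have a3 := h1 y le_rfl (by linarith)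
  calc _ ≤ ‖W (Er n) (y + 2 * h)‖ + ‖2 * W (Er n) (y + h)‖ + ‖W (Er n) y‖ + ‖D‖ := by
        refine (norm_add_le _ _).trans (add_le_add ((norm_add_le _ _).trans (add_le_add (norm_sub_le _ _) le_rfl)) le_rfl)
    _ ≤ _ := by rw [norm_mul, Complex.norm_ofNat]; linarith

lemma step (n : ℕ) {x h δ₁ δ₂ : ℝ} (hx : 1 ≤ x - 2 * h) (hh : 0 < h)
    (h1 : ∀ z, x - 2 * h ≤ z → z ≤ x + 2 * h → ‖W (Er n) z‖ ≤ δ₁)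
    (h2 : ∀ u, x - 2 * h ≤ u → u ≤ x + 2 * h → ‖Mn n u - Mn n x‖ ≤ δ₂) :
    ‖Er n x‖ ≤ 3 * (4 * δ₁ / h ^ 2 + δ₂) := by
  have bU := avg_bound n (x := x) (y := x) (by linarith) hh (fun z hz hz' => h1 z (by linarith) hz')
    (fun z hz hz' => h2 z (by linarith) hz')
  have bL := avg_bound n (x := x) (y := x - 2 * h) hx hh (fun z hz hz' => h1 z hz (by linarith))
    (fun z hz hz' => h2 z hz (by linarith))
  set U := ∫ u in Set.Ioi (1:ℝ), vonMangoldtPairSum n u * kk x h u with hU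
  set L := ∫ u in Set.Ioi (1:ℝ), vonMangoldtPairSum n u * kk (x - 2 * h) h u with hL
  set S := vonMangoldtPairSum n x with hS
  have hSU : S * h ^ 2 ≤ U := by
    rw [← kk_integral (y := x) (by linarith) hh, ← integral_const_mul]
    refine integral_mono (kk_int_real.const_mul _) (S_int_real n) fun u => ?_
    by_cases hu : u ≤ x
    · simp only [kk_zero_left hh hu]; simp
    · exact mul_le_mul_of_nonneg_right (pairSum_mono n (by linarith)) (kk_nonneg hh)
  have hSL : L ≤ S * h ^ 2 := by
    rw [← kk_integral (y := x - 2 * h) (by linarith) hh, ← integral_const_mul]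
    refine integral_mono (S_int_real n) (kk_int_real.const_mul _) fun u => ?_
    by_cases hu : u ≤ x
    · exact mul_le_mul_of_nonneg_right (pairSum_mono n (by linarith)) (kk_nonneg hh)
    · simp only [kk_zero_right (y := x - 2 * h) hh (by linarith : x - 2 * h + 2 * h ≤ u)]; simp
  set N : ℂ := (-1) ^ (n + 1) * Mn n x * h ^ 2 with hN
  set B := 4 * δ₁ + δ₂ * h ^ 2 with hB
  have hUL : U - L ≤ 2 * B := by
    have : ‖((U - L : ℝ) : ℂ)‖ ≤ 2 * B := by
      rw [show ((U - L : ℝ) : ℂ) = ((U:ℂ) - N) - ((L:ℂ) - N) by push_cast; ring]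
      exact (norm_sub_le _ _).trans (by linarith)
    rw [Complex.norm_real] at this
    exact (Real.le_norm_self _).trans this
  have hSN : ‖((S * h ^ 2 : ℝ) : ℂ) - N‖ ≤ 3 * B := by
    have h3 : ‖((S * h ^ 2 - U : ℝ) : ℂ)‖ ≤ 2 * B := by
      rw [Complex.norm_real, Real.norm_eq_abs, abs_le]; constructor <;> linarith
    rw [show ((S * h ^ 2 : ℝ) : ℂ) - N = ((S * h ^ 2 - U : ℝ) : ℂ) + ((U:ℂ) - N) by push_cast; ring]
    exact (norm_add_le _ _).trans (by linarith)
  have hsq : ((-1 : ℂ) ^ (n + 1)) * (-1) ^ (n + 1) = 1 := by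
    rw [← mul_pow]; simp
  have e : ((S * h ^ 2 : ℝ) : ℂ) - N = (-1) ^ (n + 1) * Er n x * ((h ^ 2 : ℝ) : ℂ) := by
    rw [hN]; unfold Er; push_cast
    linear_combination -(S * (h:ℂ) ^ 2) * hsq
  rw [e, norm_mul, norm_mul, norm_pow, norm_neg, norm_one, one_pow, one_mul, Complex.norm_real, Real.norm_of_nonneg (by positivity)] at hSN
  have hh2 : 0 < h ^ 2 := by positivity
  rw [← le_div_iff₀ hh2] at hSN
  refine hSN.trans (le_of_eq ?_)
  rw [hB]; field_simp
end VM

namespace VM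
open Metric Filter Topology MeasureTheory

lemma Er_final (n : ℕ) : ∃ c > (0:ℝ), ∃ K > (0:ℝ), ∃ Y₀ : ℝ, ∀ Y ≥ Y₀,
    ‖Er n Y‖ ≤ K * Y * Real.exp (-c * Real.sqrt (Real.log Y)) := by
  obtain ⟨a, ha, K, hK, x₀, hsm⟩ := sm_Er n
  obtain ⟨KM, hKM, hM⟩ := Mn_lip n
  obtain ⟨r₀, hr₀⟩ := pow_exp_eventually (2 * (n + 1)) (show 0 < a / 2 / 4 by positivity)
  set b := a / 2 with hb
  have hb0 : 0 < b := by positivity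
  refine ⟨b / 4 / 2, by positivity, 3 * (32 * K + KM * 2 * 3 ^ (n + 1)), by positivity,
    max (Real.exp ((max r₀ (max 1 (8 / b))) ^ 2)) (max (2 * x₀) 2), fun x hx => ?_⟩
  have hx1 := (le_max_left _ _).trans hx
  have hx2 : 2 * x₀ ≤ x := ((le_max_left _ _).trans (le_max_right _ _)).trans hx
  have hx3 : 2 ≤ x := ((le_max_right _ _).trans (le_max_right _ _)).trans hx
  have hx0 : 0 < x := by linarith
  have hlx : (max r₀ (max 1 (8 / b))) ^ 2 ≤ Real.log x := by rwa [← Real.le_log_iff_exp_le hx0] at hx1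
  set r := Real.sqrt (Real.log x) with hr
  have hxr : Real.log x = r ^ 2 := by rw [hr, Real.sq_sqrt]; exact le_trans (by positivity) hlx
  have hrR : max r₀ (max 1 (8 / b)) ≤ r := Real.le_sqrt_of_sq_le hlx
  have hrr0 : r₀ ≤ r := (le_max_left _ _).trans hrR
  have hr1 : 1 ≤ r := ((le_max_left _ _).trans (le_max_right _ _)).trans hrR
  have hrb : 8 / b ≤ r := ((le_max_right _ _).trans (le_max_right _ _)).trans hrR
  have hrb' : 8 ≤ b * r := by rwa [div_le_iff₀' hb0] at hrb
  have hr2 : 1 ≤ r ^ 2 := one_le_pow₀ hr1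
  set q := Real.exp (-(b / 4) * r) with hq
  have hq0 : 0 < q := Real.exp_pos _
  have hq4 : q ≤ 1 / 4 := by
    have h1 : 4 ≤ Real.exp (b / 4 * r) := by
      have e2 : Real.exp 2 ≤ Real.exp (b / 4 * r) := Real.exp_le_exp.mpr (by linarith)
      have : Real.exp 2 = Real.exp 1 * Real.exp 1 := by rw [← Real.exp_add]; norm_num
      nlinarith [Real.exp_one_gt_d9]
    rw [hq, neg_mul, Real.exp_neg, one_div]
    exact inv_anti₀ (by norm_num) h1
  set h := x * q with hh
  have hh0 : 0 < h := by positivity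
  have hh4 : h ≤ x / 4 := by rw [hh]; nlinarith
  have hlog2 := Real.log_two_lt_d9
  have hWb : ∀ z, x - 2 * h ≤ z → z ≤ x + 2 * h → ‖W (Er n) z‖ ≤ 8 * K * x ^ 3 * Real.exp (-b * r) := by
    intro z hz1 hz2
    have hz : x / 2 ≤ z := by linarith
    have hz' : z ≤ 2 * x := by linarith
    have hz0 : 0 < z := by linarith
    have hs := hsm z (by linarith)
    have hlz : r ^ 2 / 4 ≤ Real.log z := by
      have := Real.log_le_log (by positivity) hz
      rw [Real.log_div hx0.ne' two_ne_zero, hxr] at this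
      linarith
    have hsz : r / 2 ≤ Real.sqrt (Real.log z) := Real.le_sqrt_of_sq_le (by rw [div_pow]; linarith)
    have hexp : Real.exp (-a * Real.sqrt (Real.log z)) ≤ Real.exp (-b * r) :=
      Real.exp_le_exp.mpr (by rw [hb]; nlinarith)
    rw [W_eq _ hz0, norm_mul, Complex.norm_real, Real.norm_of_nonneg hz0.le]
    calc _ ≤ 2 * x * (K * ((2 * x) ^ 2 * Real.exp (-b * r))) := by
          gcongr
          refine hs.trans ?_
          gcongr
      _ = _ := by ring
  have hMb : ∀ u, x - 2 * h ≤ u → u ≤ x + 2 * h → ‖Mn n u - Mn n x‖ ≤ KM * (2 * h * (3 * r ^ 2) ^ (n + 1)) := by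
    intro u hu1 hu2
    have hlog : ∀ w, 1 ≤ w → w ≤ 2 * x → 0 ≤ 1 + Real.log w ∧ 1 + Real.log w ≤ 3 * r ^ 2 := by
      intro w hw hw2
      have := Real.log_le_log (by linarith) hw2
      rw [Real.log_mul two_ne_zero hx0.ne', hxr] at this
      have := Real.log_nonneg hw
      constructor <;> linarith
    have key : ∀ v w, 1 ≤ v → v ≤ w → w ≤ 2 * x → w - v ≤ 2 * h → ‖Mn n w - Mn n v‖ ≤ KM * (2 * h * (3 * r ^ 2) ^ (n + 1)) := by
      intro v w hv hvw hw hd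
      obtain ⟨l1, l2⟩ := hlog w (by linarith) hw
      refine (hM v w hv hvw).trans ?_
      gcongr
    rcases le_total u x with hux | hux
    · rw [norm_sub_rev]
      exact key u x (by linarith) hux (by linarith) (by linarith)
    · exact key x u (by linarith) hux (by linarith) (by linarith)
  have hst := step n (by linarith) hh0 hWb hMb
  refine hst.trans ?_
  have e1 : 4 * (8 * K * x ^ 3 * Real.exp (-b * r)) / h ^ 2 = 32 * K * x * Real.exp (-(b / 2) * r) := by
    have : Real.exp (-b * r) = Real.exp (-(b / 2) * r) * q ^ 2 := by
      rw [hq, ← Real.exp_nat_mul, ← Real.exp_add]; congr 1; push_cast; ring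
    rw [this, hh]
    field_simp
    ring
  have e2 : Real.exp (-(b / 2) * r) ≤ Real.exp (-(b / 4 / 2) * r) := Real.exp_le_exp.mpr (by nlinarith)
  have e3 := hr₀ r hrr0
  rw [e1]
  calc _ = 3 * (32 * K * x * Real.exp (-(b / 2) * r) + KM * 2 * 3 ^ (n + 1) * x * (r ^ (2 * (n + 1)) * q)) := by
        rw [hh, mul_pow, ← pow_mul]; ring
    _ ≤ 3 * (32 * K * x * Real.exp (-(b / 4 / 2) * r) + KM * 2 * 3 ^ (n + 1) * x * Real.exp (-(b / 4 / 2) * r)) := by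
        gcongr
    _ = _ := by ring
end VM

/-- as `Y → ∞`,
`(-1)^{n+1} ∑_{mr ≤ Y} Λ(r) log^n r = M_n(Y) + O(Y e^{-C√(log Y)})`. -/
theorem vonMangoldt_sum_asymptotic (n : ℕ) (hn : 1 ≤ n) (C A : ℕ → ℂ)
    (hC : ∀ᶠ s in nhdsWithin (1 : ℂ) {(1 : ℂ)}ᶜ,
      HasSum (fun j : ℕ => C j * (s - 1) ^ j) (riemannZeta s - 1 / (s - 1)))
    (hA : ∀ᶠ s in nhdsWithin (1 : ℂ) {(1 : ℂ)}ᶜ,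
      HasSum (fun j : ℕ => A j * (s - 1) ^ j)
        (deriv riemannZeta s / riemannZeta s + 1 / (s - 1))) :
    ∃ c > (0 : ℝ), ∃ K > (0 : ℝ), ∃ Y₀ : ℝ, ∀ Y ≥ Y₀,
      ‖(-1 : ℂ) ^ (n + 1) * ((vonMangoldtPairSum n Y : ℝ) : ℂ) - Mterm C A n Y‖ ≤
        K * Y * Real.exp (-c * Real.sqrt (Real.log Y)) := by
  obtain ⟨c, hc, K, hK, Y₀, h⟩ := VM.Er_final n
  refine ⟨c, hc, K, hK, Y₀, fun Y hY => ?_⟩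
  rw [← VM.Mn_eq hC hA]
  exact h Y hY
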